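/- Let 1 < p < ∞. There exists a constant C > 0, depending only on p, such that for every T > 0, every integer n ≥ 1 and every measurable f : ℝ → ℝ with f integrable on (−T, T): ‖S_n(f·χ_T)‖_{L^p((−T,T))} ≤ C·(1 + T^{17}/√n)·‖S f*‖_{L^p((0,∞))}, where χ_T denotes the indicator function of (−T, T). -/

import Mathlib

open MeasureTheory Filter Set

/-- The `k`-th Hermite function
`h_k(x) = (-1)^k π^{-1/4} 2^{-k/2} (k!)^{-1/2} e^{x²/2} (d^k/dx^k)(e^{-x²})`. -/
noncomputable def hermiteFun (k : ℕ) (x : ℝ) : ℝ :=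
  (-1 : ℝ) ^ k *
    (Real.pi ^ (-(1 : ℝ) / 4) * (2 : ℝ) ^ (-(k : ℝ) / 2) *
      ((k.factorial : ℝ)) ^ (-(1 : ℝ) / 2)) *
    Real.exp (x ^ 2 / 2) * iteratedDeriv k (fun y : ℝ => Real.exp (-y ^ 2)) x

/-- The `n`-th partial sum of the Hermite series of `f`:
`S_n f = ∑_{k=0}^n (∫ f h_k) h_k`. -/
noncomputable def hermitePartialSum (n : ℕ) (f : ℝ → ℝ) (x : ℝ) : ℝ :=
  ∑ k ∈ Finset.range (n + 1), (∫ y : ℝ, f y * hermiteFun k y) * hermiteFun k x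

/-- The Stieltjes transform `Sg(t) = ∫_0^∞ g(s)/(t+s) ds` of a `[0,∞]`-valued function. -/
noncomputable def stieltjesT (g : ℝ → ENNReal) (t : ℝ) : ENNReal :=
  ∫⁻ s in Set.Ioi (0 : ℝ), g s / ENNReal.ofReal (t + s)

/-- The decreasing rearrangement `f*(t) = inf{λ > 0 : |{x : |f(x)| > λ}| ≤ t}`,
with value `∞` when no such `λ` exists. -/
noncomputable def decRearrange (f : ℝ → ℝ) (t : ℝ) : ENNReal :=
  sInf {l : ENNReal | 0 < l ∧ volume {x : ℝ | l < ENNReal.ofReal |f x|} ≤ ENNReal.ofReal t}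

open scoped Topology ENNReal

/-!
The Christoffel–Darboux formula writes `S_n` as `√(2(n + 1)) / 2` times a difference of two Hilbert
transforms, each multiplied before and after by `h_n` and `h_{n+1}`. The energy of the oscillator
equation `h_n'' = (x² - (2n + 1)) h_n` shows that on `(-T, T)` these weights are at most some `a`
with `√n a² ≲ 1 + T ^ m / √n` for `m ≥ 3`, so only the `L^p` boundedness of the Hilbert transform
is needed.

For `1 < p ≤ 2` and `g ≥ 0` the Cauchy transform `F` of `g` has real part a Poisson integral and
imaginary part the conjugate one. Since `F ^ p` is holomorphic and decays faster than `1 / z`, its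
integral over a horizontal line vanishes, and Stein's inequality
`|Im z| ^ p ≤ A (Re z) ^ p - B Re (z ^ p)` turns this into the bound. Self-adjointness of `S_n`
gives `p > 2`, and `f* ≤ 2 S f*`, as `f*` is decreasing, replaces `‖f‖_p = ‖f*‖_p` by `‖S f*‖_p`.
-/

/-! ### Hermite functions: recurrences and the Christoffel–Darboux formula -/

lemma hasDerivAt_iteratedDeriv_gaussian (k : ℕ) (x : ℝ) :
    HasDerivAt (iteratedDeriv k (fun y : ℝ => Real.exp (-y ^ 2)))
      (iteratedDeriv (k + 1) (fun y : ℝ => Real.exp (-y ^ 2)) x) x := by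
  have hc : ContDiff ℝ (k + 1 : ℕ) (fun y : ℝ => Real.exp (-y ^ 2)) := by fun_prop
  rw [iteratedDeriv_succ]
  exact (hc.differentiable_iteratedDeriv k (by exact_mod_cast k.lt_succ_self) x).hasDerivAt

lemma iteratedDeriv_one_gaussian (x : ℝ) :
    iteratedDeriv 1 (fun y : ℝ => Real.exp (-y ^ 2)) x = -2 * x * Real.exp (-x ^ 2) := by
  have h : HasDerivAt (fun y : ℝ => -y ^ 2) (-(2 * x)) x := by
    simpa using (hasDerivAt_pow 2 x).fun_neg
  rw [iteratedDeriv_one, h.exp.deriv]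
  ring

lemma iteratedDeriv_gaussian_succ_succ (k : ℕ) (x : ℝ) :
    iteratedDeriv (k + 2) (fun y : ℝ => Real.exp (-y ^ 2)) x =
      -2 * x * iteratedDeriv (k + 1) (fun y : ℝ => Real.exp (-y ^ 2)) x
        - 2 * (k + 1) * iteratedDeriv k (fun y : ℝ => Real.exp (-y ^ 2)) x := by
  induction k generalizing x with
  | zero =>
    have hfirst : iteratedDeriv 1 (fun y : ℝ => Real.exp (-y ^ 2))
        = fun x => -2 * x * iteratedDeriv 0 (fun y : ℝ => Real.exp (-y ^ 2)) x := by
      funext y; rw [iteratedDeriv_one_gaussian, iteratedDeriv_zero]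
    have hprod := ((hasDerivAt_id x).const_mul (-2)).mul (hasDerivAt_iteratedDeriv_gaussian 0 x)
    have huniq := (hasDerivAt_iteratedDeriv_gaussian 1 x).unique
      (hprod.congr_of_eventuallyEq (by rw [hfirst]; rfl))
    simp only [id, zero_add, Nat.cast_zero] at huniq ⊢
    rw [huniq]
    ring
  | succ k ih =>
    have hprod := (((hasDerivAt_id x).const_mul (-2)).mul
      (hasDerivAt_iteratedDeriv_gaussian (k + 1) x)).sub
      ((hasDerivAt_iteratedDeriv_gaussian k x).const_mul (2 * ((k : ℝ) + 1)))
    have huniq := (hasDerivAt_iteratedDeriv_gaussian (k + 2) x).unique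
      (hprod.congr_of_eventuallyEq (Eventually.of_forall ih))
    simp only [id] at huniq
    rw [huniq]
    push_cast
    ring

/-- The normalising constant `(-1)^k π^{-1/4} 2^{-k/2} (k!)^{-1/2}` of the `k`-th Hermite
function. -/
noncomputable def hermiteCoeff (k : ℕ) : ℝ :=
  (-1 : ℝ) ^ k * (Real.pi ^ (-(1 : ℝ) / 4) * (2 : ℝ) ^ (-(k : ℝ) / 2) *
    ((k.factorial : ℝ)) ^ (-(1 : ℝ) / 2))

lemma hermiteFun_eq (k : ℕ) (x : ℝ) : hermiteFun k x = hermiteCoeff k * Real.exp (x ^ 2 / 2) *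
    iteratedDeriv k (fun y : ℝ => Real.exp (-y ^ 2)) x := rfl

lemma sqrt_mul_hermiteCoeff_succ (k : ℕ) :
    √(2 * (k + 1)) * hermiteCoeff (k + 1) = -hermiteCoeff k := by
  have hk : (0 : ℝ) < k + 1 := by positivity
  have htwo : (2 : ℝ) ^ (-((k + 1 : ℕ) : ℝ) / 2) = 2 ^ (-(k : ℝ) / 2) * 2 ^ (-(1 : ℝ) / 2) := by
    rw [← Real.rpow_add two_pos]; congr 1; push_cast; ring
  have hfact : (((k + 1).factorial : ℕ) : ℝ) ^ (-(1 : ℝ) / 2)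
      = (k + 1 : ℝ) ^ (-(1 : ℝ) / 2) * (k.factorial : ℝ) ^ (-(1 : ℝ) / 2) := by
    rw [Nat.factorial_succ]; push_cast
    rw [Real.mul_rpow hk.le (by positivity)]
  have hsqrt : √(2 * (k + 1 : ℝ)) * (2 ^ (-(1 : ℝ) / 2) * (k + 1 : ℝ) ^ (-(1 : ℝ) / 2)) = 1 := by
    rw [← Real.mul_rpow two_pos.le hk.le, Real.sqrt_eq_rpow, ← Real.rpow_add (by positivity)]
    norm_num
  unfold hermiteCoeff
  rw [htwo, hfact, pow_succ]
  linear_combination (-(-1 : ℝ) ^ k * (Real.pi ^ (-(1 : ℝ) / 4) * (2 : ℝ) ^ (-(k : ℝ) / 2) *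
    ((k.factorial : ℝ)) ^ (-(1 : ℝ) / 2))) * hsqrt

lemma hermiteFun_zero (x : ℝ) :
    hermiteFun 0 x = Real.pi ^ (-(1 : ℝ) / 4) * Real.exp (-x ^ 2 / 2) := by
  have hexp : Real.exp (-x ^ 2 / 2) = Real.exp (x ^ 2 / 2) * Real.exp (-x ^ 2) := by
    rw [← Real.exp_add]; congr 1; ring
  rw [hexp]
  simp [hermiteFun, mul_assoc]

lemma hermiteFun_one (x : ℝ) : hermiteFun 1 x = √2 * (x * hermiteFun 0 x) := by
  have hcoeff := sqrt_mul_hermiteCoeff_succ 0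
  have hsq : √2 * √2 = (2 : ℝ) := Real.mul_self_sqrt two_pos.le
  simp only [Nat.cast_zero, zero_add, mul_one] at hcoeff
  rw [hermiteFun_eq, hermiteFun_eq, iteratedDeriv_one_gaussian, iteratedDeriv_zero]
  linear_combination -√2 * (x * Real.exp (x ^ 2 / 2) * Real.exp (-x ^ 2)) * hcoeff +
    (x * Real.exp (x ^ 2 / 2) * Real.exp (-x ^ 2)) * hermiteCoeff 1 * hsq

lemma hermiteFun_succ_succ (k : ℕ) (x : ℝ) :
    √(2 * (k + 2)) * hermiteFun (k + 2) x =
      2 * x * hermiteFun (k + 1) x - √(2 * (k + 1)) * hermiteFun k x := by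
  have hcoeff := sqrt_mul_hermiteCoeff_succ k
  have hcoeff' := sqrt_mul_hermiteCoeff_succ (k + 1)
  have hsq : √(2 * (k + 1)) * √(2 * (k + 1)) = (2 * (k + 1) : ℝ) :=
    Real.mul_self_sqrt (by positivity)
  push_cast at hcoeff'
  rw [show (k : ℝ) + 1 + 1 = k + 2 by ring] at hcoeff'
  rw [hermiteFun_eq, hermiteFun_eq, hermiteFun_eq, iteratedDeriv_gaussian_succ_succ]
  set a := iteratedDeriv (k + 1) (fun y : ℝ => Real.exp (-y ^ 2)) x
  set b := iteratedDeriv k (fun y : ℝ => Real.exp (-y ^ 2)) x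
  set e := Real.exp (x ^ 2 / 2)
  linear_combination e * (-2 * x * a - 2 * (k + 1) * b) * hcoeff' +
    e * b * √(2 * (k + 1)) * hcoeff - e * b * hermiteCoeff (k + 1) * hsq

/-- The kernel `∑_{k=0}^n h_k(x) h_k(y)` of the partial sum operator `S_n`. -/
noncomputable def hermiteKernel (n : ℕ) (x y : ℝ) : ℝ :=
  ∑ k ∈ Finset.range (n + 1), hermiteFun k x * hermiteFun k y

lemma sub_mul_hermiteKernel (n : ℕ) (x y : ℝ) :
    (x - y) * hermiteKernel n x y = √(2 * (n + 1)) / 2 *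
      (hermiteFun (n + 1) x * hermiteFun n y - hermiteFun n x * hermiteFun (n + 1) y) := by
  unfold hermiteKernel
  induction n with
  | zero =>
    have hsq : √2 * √2 = (2 : ℝ) := Real.mul_self_sqrt two_pos.le
    simp only [zero_add, Finset.range_one, Finset.sum_singleton, hermiteFun_one, Nat.cast_zero,
      mul_one]
    linear_combination -(x - y) * hermiteFun 0 x * hermiteFun 0 y / 2 * hsq
  | succ n ih =>
    rw [Finset.sum_range_succ, mul_add, ih]
    have hx := hermiteFun_succ_succ n x
    have hy := hermiteFun_succ_succ n y
    push_cast
    rw [show (n : ℝ) + 1 + 1 = n + 2 by ring]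
    linear_combination -hermiteFun (n + 1) y / 2 * hx + hermiteFun (n + 1) x / 2 * hy

lemma hasDerivAt_hermiteFun (k : ℕ) (x : ℝ) :
    HasDerivAt (hermiteFun k)
      (x * hermiteFun k x - √(2 * (k + 1)) * hermiteFun (k + 1) x) x := by
  have hsq : HasDerivAt (fun x : ℝ => x ^ 2 / 2) x x := by
    simpa using (hasDerivAt_pow 2 x).div_const 2
  refine ((hsq.exp.const_mul (hermiteCoeff k)).mul
    (hasDerivAt_iteratedDeriv_gaussian k x)).congr_deriv ?_
  rw [hermiteFun_eq, hermiteFun_eq]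
  linear_combination (Real.exp (x ^ 2 / 2) *
    iteratedDeriv (k + 1) (fun y : ℝ => Real.exp (-y ^ 2)) x) * sqrt_mul_hermiteCoeff_succ k

lemma hasDerivAt_hermiteFun_succ (k : ℕ) (x : ℝ) :
    HasDerivAt (hermiteFun (k + 1))
      (√(2 * (k + 1)) * hermiteFun k x - x * hermiteFun (k + 1) x) x := by
  refine (hasDerivAt_hermiteFun (k + 1) x).congr_deriv ?_
  push_cast
  rw [show (k : ℝ) + 1 + 1 = k + 2 by ring]
  linear_combination -hermiteFun_succ_succ k x

@[fun_prop]
lemma continuous_hermiteFun (k : ℕ) : Continuous (hermiteFun k) :=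
  continuous_iff_continuousAt.2 fun x => (hasDerivAt_hermiteFun k x).continuousAt

lemma tendsto_pow_mul_hermiteFun_zero (m : ℕ) :
    Tendsto (fun x => x ^ m * hermiteFun 0 x) (cocompact ℝ) (𝓝 0) := by
  have h := (tendsto_rpow_abs_mul_exp_neg_mul_sq_cocompact (a := 1 / 2) (by norm_num) m).const_mul
    (Real.pi ^ (-(1 : ℝ) / 4))
  rw [mul_zero] at h
  refine squeeze_zero_norm (fun x => le_of_eq ?_) h
  have hpi : 0 < Real.pi ^ (-(1 : ℝ) / 4) := by positivity
  rw [hermiteFun_zero, norm_mul, norm_pow, norm_mul, Real.rpow_natCast, Real.norm_eq_abs,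
    Real.norm_of_nonneg hpi.le, Real.norm_of_nonneg (Real.exp_pos _).le,
    show -x ^ 2 / 2 = -(1 / 2) * x ^ 2 by ring]
  ring

lemma tendsto_pow_mul_hermiteFun (k m : ℕ) :
    Tendsto (fun x => x ^ m * hermiteFun k x) (cocompact ℝ) (𝓝 0) := by
  induction k using Nat.twoStepInduction generalizing m with
  | zero => exact tendsto_pow_mul_hermiteFun_zero m
  | one =>
    have h := (tendsto_pow_mul_hermiteFun_zero (m + 1)).const_mul √2
    rw [mul_zero] at h
    refine h.congr fun x => ?_
    rw [hermiteFun_one]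
    ring
  | more k ih ih' =>
    have h := (((ih' (m + 1)).const_mul 2).sub ((ih m).const_mul √(2 * (k + 1)))).const_mul
      (√(2 * (k + 2)))⁻¹
    simp only [mul_zero, sub_zero] at h
    refine h.congr fun x => ?_
    have hpos : (0 : ℝ) < √(2 * (k + 2)) := by positivity
    rw [inv_mul_eq_iff_eq_mul₀ hpos.ne']
    linear_combination -x ^ m * hermiteFun_succ_succ k x

lemma tendsto_hermiteFun (k : ℕ) : Tendsto (hermiteFun k) (cocompact ℝ) (𝓝 0) := by
  simpa using tendsto_pow_mul_hermiteFun k 0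

lemma hermiteFun_succ_succ_apply_zero_sq (k : ℕ) :
    hermiteFun (k + 2) 0 ^ 2 = (k + 1) / (k + 2) * hermiteFun k 0 ^ 2 := by
  have hrec : √(2 * (k + 2)) * hermiteFun (k + 2) 0 = -(√(2 * (k + 1)) * hermiteFun k 0) := by
    simpa using hermiteFun_succ_succ k 0
  have hsq := congrArg (· ^ 2) hrec
  simp only [neg_sq, mul_pow] at hsq
  rw [Real.sq_sqrt (by positivity), Real.sq_sqrt (by positivity)] at hsq
  field_simp
  linarith

lemma hermiteFun_apply_zero_sq_le (k : ℕ) : hermiteFun k 0 ^ 2 ≤ 1 / √(k + 1) := by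
  induction k using Nat.twoStepInduction with
  | zero =>
    have hle : Real.pi ^ (-(1 : ℝ) / 4) ≤ 1 :=
      Real.rpow_le_one_of_one_le_of_nonpos (by linarith [Real.pi_gt_three]) (by norm_num)
    have hpos : 0 ≤ Real.pi ^ (-(1 : ℝ) / 4) := by positivity
    simpa [hermiteFun_zero, abs_of_nonneg hpos] using hle
  | one => simp [hermiteFun_one]
  | more k ih _ =>
    rw [hermiteFun_succ_succ_apply_zero_sq]
    refine (mul_le_mul_of_nonneg_left ih (by positivity)).trans ?_
    push_cast
    rw [div_mul_div_comm, mul_one, div_le_div_iff₀ (by positivity) (by positivity), one_mul]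
    have hgm : √((k : ℝ) + 1) * √((k : ℝ) + 2 + 1) ≤ k + 2 := by
      rw [← Real.sqrt_mul (by positivity)]
      exact Real.sqrt_le_iff.2 ⟨by positivity, by nlinarith⟩
    calc ((k : ℝ) + 1) * √((k : ℝ) + 2 + 1)
        = √((k : ℝ) + 1) * (√((k : ℝ) + 1) * √((k : ℝ) + 2 + 1)) := by
          rw [← mul_assoc, Real.mul_self_sqrt (by positivity)]
      _ ≤ √((k : ℝ) + 1) * (k + 2) := by gcongr
      _ = _ := mul_comm _ _

/-! ### Solutions of the oscillator equation and pointwise bounds -/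

/-- `φ` solves the oscillator equation `φ'' = (x² - N) φ`, written as a first-order system for
`φ` and its derivative `ψ`. -/
structure IsOscillator (N : ℝ) (φ ψ : ℝ → ℝ) : Prop where
  hasDerivAt : ∀ x, HasDerivAt φ (ψ x) x
  hasDerivAt_deriv : ∀ x, HasDerivAt ψ ((x ^ 2 - N) * φ x) x

namespace IsOscillator

variable {N r x : ℝ} {φ ψ : ℝ → ℝ}

lemma comp_neg (h : IsOscillator N φ ψ) :
    IsOscillator N (fun x => φ (-x)) (fun x => -ψ (-x)) where
  hasDerivAt x := ((h.hasDerivAt (-x)).comp x (hasDerivAt_neg x)).congr_deriv (by ring)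
  hasDerivAt_deriv x :=
    ((h.hasDerivAt_deriv (-x)).comp x (hasDerivAt_neg x)).neg.congr_deriv (by ring)

lemma hasDerivAt_sq (h : IsOscillator N φ ψ) (x : ℝ) :
    HasDerivAt (fun x => φ x ^ 2) (2 * (φ x * ψ x)) x := by
  simpa [mul_assoc] using (h.hasDerivAt x).fun_pow 2

lemma hasDerivAt_energy (h : IsOscillator N φ ψ) (x : ℝ) :
    HasDerivAt (fun x => (N - x ^ 2) * φ x ^ 2 + ψ x ^ 2) (-(2 * x * φ x ^ 2)) x := by
  have hpot : HasDerivAt (fun x : ℝ => N - x ^ 2) (-(2 * x)) x := by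
    simpa using (hasDerivAt_pow 2 x).const_sub N
  have hkin : HasDerivAt (fun x => ψ x ^ 2) (2 * ψ x * ((x ^ 2 - N) * φ x)) x := by
    simpa using (h.hasDerivAt_deriv x).fun_pow 2
  exact ((hpot.fun_mul (h.hasDerivAt_sq x)).fun_add hkin).congr_deriv (by ring)

lemma energy_le_of_nonneg (h : IsOscillator N φ ψ) (hx : 0 ≤ x) :
    (N - x ^ 2) * φ x ^ 2 + ψ x ^ 2 ≤ N * φ 0 ^ 2 + ψ 0 ^ 2 := by
  have hanti : AntitoneOn (fun x => (N - x ^ 2) * φ x ^ 2 + ψ x ^ 2) (Ici 0) := by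
    refine antitoneOn_of_deriv_nonpos (convex_Ici 0)
      (fun x _ => (h.hasDerivAt_energy x).continuousAt.continuousWithinAt)
      (fun x _ => (h.hasDerivAt_energy x).differentiableAt.differentiableWithinAt) fun x hx => ?_
    rw [interior_Ici, mem_Ioi] at hx
    rw [(h.hasDerivAt_energy x).deriv, neg_nonpos]
    positivity
  simpa using hanti self_mem_Ici hx hx

lemma energy_le (h : IsOscillator N φ ψ) (x : ℝ) :
    (N - x ^ 2) * φ x ^ 2 + ψ x ^ 2 ≤ N * φ 0 ^ 2 + ψ 0 ^ 2 := by
  rcases le_total 0 x with hx | hx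
  · exact h.energy_le_of_nonneg hx
  · simpa using h.comp_neg.energy_le_of_nonneg (neg_nonneg.2 hx)

lemma convexOn_sq (h : IsOscillator (r ^ 2) φ ψ) (hr : 0 ≤ r) :
    ConvexOn ℝ (Ici r) fun x => φ x ^ 2 := by
  refine convexOn_of_hasDerivWithinAt2_nonneg (convex_Ici r)
    (fun x _ => (h.hasDerivAt_sq x).continuousAt.continuousWithinAt)
    (fun x _ => (h.hasDerivAt_sq x).hasDerivWithinAt)
    (fun x _ => (((h.hasDerivAt x).fun_mul (h.hasDerivAt_deriv x)).const_mul 2).hasDerivWithinAt)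
    fun x hx => ?_
  rw [interior_Ici, mem_Ioi] at hx
  have hpot : 0 ≤ (x ^ 2 - r ^ 2) * φ x ^ 2 := mul_nonneg (by nlinarith) (sq_nonneg _)
  nlinarith [sq_nonneg (ψ x)]

lemma sq_le_sq_of_le (h : IsOscillator (r ^ 2) φ ψ) (hr : 0 ≤ r) (hφ : Tendsto φ atTop (𝓝 0))
    (hx : r ≤ x) : φ x ^ 2 ≤ φ r ^ 2 := by
  have hlim : Tendsto (fun y => max (φ r ^ 2) (φ y ^ 2)) atTop (𝓝 (φ r ^ 2)) := by
    have h := (tendsto_const_nhds (x := φ r ^ 2)).max (hφ.pow 2)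
    rwa [zero_pow two_ne_zero, max_eq_left (sq_nonneg _)] at h
  refine ge_of_tendsto hlim ?_
  filter_upwards [eventually_ge_atTop x] with y hy
  exact (h.convexOn_sq hr).le_max_of_mem_Icc self_mem_Ici (hx.trans hy) ⟨hx, hy⟩

lemma abs_le_of_mem_Icc (h : IsOscillator (r ^ 2) φ ψ) (hr : 1 ≤ r) (hx : x ∈ Icc 0 r) :
    |φ x| ≤ 2 * √(r ^ 2 * φ 0 ^ 2 + ψ 0 ^ 2) := by
  have hinner : ∀ y ∈ Icc 0 (r - 1), |φ y| ≤ √(r ^ 2 * φ 0 ^ 2 + ψ 0 ^ 2) := fun y hy => by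
    have hgap : 1 ≤ r ^ 2 - y ^ 2 := by nlinarith [hy.1, hy.2]
    exact Real.abs_le_sqrt (by nlinarith [h.energy_le y, sq_nonneg (φ y), sq_nonneg (ψ y)])
  have hderiv : ∀ y ∈ Icc (r - 1) r, ‖ψ y‖ ≤ √(r ^ 2 * φ 0 ^ 2 + ψ 0 ^ 2) := fun y hy => by
    have hpot : 0 ≤ (r ^ 2 - y ^ 2) * φ y ^ 2 :=
      mul_nonneg (by nlinarith [hy.1, hy.2]) (sq_nonneg _)
    exact Real.abs_le_sqrt (by linarith [h.energy_le y])
  rcases le_total x (r - 1) with hle | hle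
  · linarith [hinner x ⟨hx.1, hle⟩, Real.sqrt_nonneg (r ^ 2 * φ 0 ^ 2 + ψ 0 ^ 2)]
  · have hmv := (convex_Icc (r - 1) r).norm_image_sub_le_of_norm_hasDerivWithin_le
      (fun y _ => (h.hasDerivAt y).hasDerivWithinAt) hderiv (left_mem_Icc.2 (by linarith))
      ⟨hle, hx.2⟩
    rw [Real.norm_eq_abs, Real.norm_of_nonneg (by linarith)] at hmv
    have hlen := mul_le_of_le_one_right (Real.sqrt_nonneg (r ^ 2 * φ 0 ^ 2 + ψ 0 ^ 2))
      (show x - (r - 1) ≤ 1 by linarith [hx.2])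
    linarith [abs_sub_abs_le_abs_sub (φ x) (φ (r - 1)),
      hinner (r - 1) ⟨by linarith, le_rfl⟩]

lemma sq_le_of_nonneg (h : IsOscillator (r ^ 2) φ ψ) (hr : 1 ≤ r) (hφ : Tendsto φ atTop (𝓝 0))
    (hx : 0 ≤ x) : φ x ^ 2 ≤ 4 * (r ^ 2 * φ 0 ^ 2 + ψ 0 ^ 2) := by
  have hinner : ∀ y ∈ Icc 0 r, φ y ^ 2 ≤ 4 * (r ^ 2 * φ 0 ^ 2 + ψ 0 ^ 2) := fun y hy => by
    calc φ y ^ 2 = |φ y| ^ 2 := (sq_abs _).symm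
      _ ≤ (2 * √(r ^ 2 * φ 0 ^ 2 + ψ 0 ^ 2)) ^ 2 := by gcongr; exact h.abs_le_of_mem_Icc hr hy
      _ = _ := by rw [mul_pow, Real.sq_sqrt (by positivity)]; norm_num
  rcases le_total x r with hxr | hxr
  · exact hinner x ⟨hx, hxr⟩
  · exact (h.sq_le_sq_of_le (by linarith) hφ hxr).trans (hinner r ⟨by linarith, le_rfl⟩)

lemma sq_le (h : IsOscillator (r ^ 2) φ ψ) (hr : 1 ≤ r) (hφ : Tendsto φ (cocompact ℝ) (𝓝 0))
    (x : ℝ) : φ x ^ 2 ≤ 4 * (r ^ 2 * φ 0 ^ 2 + ψ 0 ^ 2) := by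
  rcases le_total 0 x with hx | hx
  · exact h.sq_le_of_nonneg hr (hφ.mono_left atTop_le_cocompact) hx
  · simpa using h.comp_neg.sq_le_of_nonneg hr
      ((hφ.mono_left atBot_le_cocompact).comp tendsto_neg_atTop_atBot) (neg_nonneg.2 hx)

end IsOscillator

lemma isOscillator_hermiteFun (k : ℕ) :
    IsOscillator (2 * k + 1) (hermiteFun k)
      (fun x => x * hermiteFun k x - √(2 * (k + 1)) * hermiteFun (k + 1) x) where
  hasDerivAt := hasDerivAt_hermiteFun k
  hasDerivAt_deriv x := by
    have hsq : √(2 * (k + 1)) * √(2 * (k + 1)) = (2 * (k + 1) : ℝ) :=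
      Real.mul_self_sqrt (by positivity)
    refine (((hasDerivAt_id x).mul (hasDerivAt_hermiteFun k x)).sub
      ((hasDerivAt_hermiteFun_succ k x).const_mul √(2 * (k + 1)))).congr_deriv ?_
    simp only [id]
    linear_combination -hermiteFun k x * hsq

lemma hermiteFun_energy_apply_zero_le (k : ℕ) :
    (2 * k + 1) * hermiteFun k 0 ^ 2
      + (0 * hermiteFun k 0 - √(2 * (k + 1)) * hermiteFun (k + 1) 0) ^ 2 ≤ 4 * √(k + 1) := by
  have hk : hermiteFun k 0 ^ 2 ≤ 1 / √(k + 1) := hermiteFun_apply_zero_sq_le k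
  have hk' : hermiteFun (k + 1) 0 ^ 2 ≤ 1 / √(k + 1) :=
    (hermiteFun_apply_zero_sq_le (k + 1)).trans <| by gcongr; simp
  rw [zero_mul, zero_sub, neg_sq, mul_pow, Real.sq_sqrt (by positivity)]
  calc (2 * k + 1) * hermiteFun k 0 ^ 2 + 2 * (k + 1) * hermiteFun (k + 1) 0 ^ 2
      ≤ (2 * (k + 1)) * (1 / √(k + 1)) + 2 * (k + 1) * (1 / √(k + 1)) := by gcongr; linarith
    _ = 4 * ((k + 1) / √(k + 1)) := by ring
    _ = 4 * √(k + 1) := by rw [Real.div_sqrt]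

lemma hermiteFun_sq_le_of_sq_le (k : ℕ) {x : ℝ} (hx : x ^ 2 ≤ k) :
    hermiteFun k x ^ 2 ≤ 4 / √(k + 1) := by
  have henergy := ((isOscillator_hermiteFun k).energy_le x).trans
    (hermiteFun_energy_apply_zero_le k)
  have hmul : (k + 1) * hermiteFun k x ^ 2 ≤ 4 * √(k + 1) := by
    nlinarith [sq_nonneg (x * hermiteFun k x - √(2 * (k + 1)) * hermiteFun (k + 1) x),
      sq_nonneg (hermiteFun k x)]
  rw [le_div_iff₀ (by positivity)]
  refine le_of_mul_le_mul_right ?_ (show 0 < √((k : ℝ) + 1) by positivity)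
  rw [mul_assoc, Real.mul_self_sqrt (by positivity)]
  linarith

lemma hermiteFun_sq_le (k : ℕ) (x : ℝ) : hermiteFun k x ^ 2 ≤ 16 * √(k + 1) := by
  have hr : √(2 * k + 1 : ℝ) ^ 2 = 2 * k + 1 := Real.sq_sqrt (by positivity)
  have hosc := isOscillator_hermiteFun k
  rw [← hr] at hosc
  have h := hosc.sq_le (Real.one_le_sqrt.2 (by simp)) (tendsto_hermiteFun k) x
  rw [hr] at h
  linarith [hermiteFun_energy_apply_zero_le k]

lemma exists_abs_hermiteFun_le {T : ℝ} (hT : 0 < T) {n m : ℕ} (hn : 1 ≤ n) (hm : 3 ≤ m) :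
    ∃ a : ℝ, 0 ≤ a ∧ (∀ x ∈ Ioo (-T) T, |hermiteFun n x| ≤ a ∧ |hermiteFun (n + 1) x| ≤ a) ∧
      √(2 * (n + 1)) * a ^ 2 ≤ 100 * (1 + T ^ m / √n) := by
  have hn' : (1 : ℝ) ≤ n := by exact_mod_cast hn
  have hratio : 0 ≤ T ^ m / √n := by positivity
  rcases le_total (T ^ 2) n with hTn | hTn
  · refine ⟨√(4 / √(n + 1)), Real.sqrt_nonneg _, fun x hx => ?_, ?_⟩
    · have hxn : x ^ 2 ≤ n := (sq_le_sq' hx.1.le hx.2.le).trans hTn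
      refine ⟨Real.abs_le_sqrt (hermiteFun_sq_le_of_sq_le n hxn), Real.abs_le_sqrt ?_⟩
      refine (hermiteFun_sq_le_of_sq_le (n + 1) (hxn.trans (by simp))).trans ?_
      gcongr; simp
    · rw [Real.sq_sqrt (by positivity), Real.sqrt_mul two_pos.le]
      have hne : √((n : ℝ) + 1) ≠ 0 := by positivity
      calc √2 * √(n + 1) * (4 / √(n + 1)) = 4 * √2 := by
            rw [mul_assoc, mul_div_cancel₀ _ hne, mul_comm]
        _ ≤ 4 * 2 := by gcongr; exact Real.sqrt_le_iff.2 (by norm_num)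
        _ ≤ _ := by linarith
  · have hT1 : 1 ≤ T := by nlinarith
    refine ⟨√(16 * √(n + 2)), Real.sqrt_nonneg _, fun x _ => ?_, ?_⟩
    · refine ⟨Real.abs_le_sqrt ((hermiteFun_sq_le n x).trans ?_), Real.abs_le_sqrt
        ((hermiteFun_sq_le (n + 1) x).trans_eq ?_)⟩
      · gcongr; norm_num
      · push_cast; ring_nf
    · have hsqrt : √(2 * ((n : ℝ) + 1)) * √(n + 2) ≤ 4 * n := by
        rw [← Real.sqrt_mul (by positivity)]
        exact Real.sqrt_le_iff.2 ⟨by positivity, by nlinarith⟩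
      have hpow : (n : ℝ) ≤ T ^ m / √n := by
        rw [le_div_iff₀ (by positivity)]
        calc (n : ℝ) * √n ≤ T ^ 2 * T := by
              gcongr; exact Real.sqrt_le_iff.2 ⟨hT.le, hTn⟩
          _ = T ^ 3 := by ring
          _ ≤ T ^ m := pow_le_pow_right₀ hT1 hm
      rw [Real.sq_sqrt (by positivity)]
      linarith

/-! ### Conjugate Poisson integrals -/

lemma exists_one_le_cos_rpow_sub_cos_mul {p : ℝ} (hp : 1 < p) (hp2 : p ≤ 2) :
    ∃ A B : ℝ, 0 ≤ A ∧ ∀ θ : ℝ, |θ| < Real.pi / 2 →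
      1 ≤ A * Real.cos θ ^ p - B * Real.cos (θ * p) := by
  have hp0 : 0 < p := by linarith
  have hpi := Real.pi_pos
  obtain ⟨θ₀, hθ₀, hθ₀'⟩ : ∃ θ₀, Real.pi / 2 / p < θ₀ ∧ θ₀ < Real.pi / 2 :=
    exists_between (div_lt_self (by positivity) hp)
  have hθ₀_pos : 0 < θ₀ := lt_trans (by positivity) hθ₀
  have hθ₀p : Real.pi / 2 < θ₀ * p := (div_lt_iff₀ hp0).1 hθ₀
  set c := -Real.cos (θ₀ * p) with hc_def
  have hc : 0 < c := neg_pos.2 (Real.cos_neg_of_pi_div_two_lt_of_lt hθ₀p (by nlinarith))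
  have hcos : 0 < Real.cos θ₀ := Real.cos_pos_of_mem_Ioo ⟨by linarith, hθ₀'⟩
  refine ⟨(1 + 1 / c) / Real.cos θ₀ ^ p, 1 / c, by positivity, fun θ hθ => ?_⟩
  have hcosθ : 0 < Real.cos θ := Real.cos_pos_of_mem_Ioo (abs_lt.1 hθ)
  rcases le_total θ₀ |θ| with hle | hle
  · have hcosp : Real.cos (θ * p) ≤ -c := by
      rw [← Real.cos_abs (θ * p), abs_mul, abs_of_pos hp0, hc_def, neg_neg]
      exact Real.cos_le_cos_of_nonneg_of_le_pi (by positivity) (by nlinarith) (by gcongr)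
    have hA : 0 ≤ (1 + 1 / c) / Real.cos θ₀ ^ p * Real.cos θ ^ p := by positivity
    have hB : 1 / c * Real.cos (θ * p) ≤ 1 / c * -c := by gcongr
    have hc' : 1 / c * -c = -1 := by field_simp
    linarith
  · have hcos_le : Real.cos θ₀ ≤ Real.cos θ := by
      rw [← Real.cos_abs θ]
      exact Real.cos_le_cos_of_nonneg_of_le_pi (abs_nonneg _) (by linarith) hle
    have hA : 1 + 1 / c ≤ (1 + 1 / c) / Real.cos θ₀ ^ p * Real.cos θ ^ p := by
      rw [div_mul_eq_mul_div, le_div_iff₀ (by positivity)]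
      gcongr
    have hB : 1 / c * Real.cos (θ * p) ≤ 1 / c * 1 := by gcongr; exact Real.cos_le_one _
    linarith

/- Stein's inequality: the harmonic function `Re z ^ p` bridges the gap between `|Im z| ^ p` and
`(Re z) ^ p` in the right half-plane. -/
lemma exists_abs_im_rpow_le {p : ℝ} (hp : 1 < p) (hp2 : p ≤ 2) :
    ∃ A B : ℝ, 0 ≤ A ∧ ∀ z : ℂ, 0 < z.re →
      |z.im| ^ p ≤ A * z.re ^ p - B * (z ^ (p : ℂ)).re := by
  obtain ⟨A, B, hA, hAB⟩ := exists_one_le_cos_rpow_sub_cos_mul hp hp2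
  refine ⟨A, B, hA, fun z hz => ?_⟩
  have harg : |z.arg| < Real.pi / 2 := Complex.abs_arg_lt_pi_div_two_iff.2 (Or.inl hz)
  have hcos : 0 ≤ Real.cos z.arg := (Real.cos_pos_of_mem_Ioo (abs_lt.1 harg)).le
  calc |z.im| ^ p ≤ ‖z‖ ^ p := by gcongr; exact Complex.abs_im_le_norm z
    _ ≤ ‖z‖ ^ p * (A * Real.cos z.arg ^ p - B * Real.cos (z.arg * p)) :=
        le_mul_of_one_le_right (by positivity) (hAB _ harg)
    _ = A * z.re ^ p - B * (z ^ (p : ℂ)).re := by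
        rw [Complex.cpow_ofReal_re, ← Complex.norm_mul_cos_arg z,
          Real.mul_rpow (norm_nonneg _) hcos]
        ring

lemma norm_integral_boundary_rect_le {E : Type*} [NormedAddCommGroup E] [NormedSpace ℂ E]
    [CompleteSpace E] {G : ℂ → E} {ε R M : ℝ} (hR : 0 ≤ R)
    (hG : DifferentiableOn ℂ G {z | ε ≤ z.im})
    (hM : ∀ z : ℂ, ε ≤ z.im → (|z.re| = R ∨ z.im = ε + R) → ‖G z‖ ≤ M) :
    ‖∫ x in (-R)..R, G (x + ε * Complex.I)‖ ≤ 4 * (M * R) := by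
  have hrect := Complex.integral_boundary_rect_eq_zero_of_differentiableOn G
    (⟨-R, ε⟩ : ℂ) (⟨R, ε + R⟩ : ℂ) (hG.mono fun z hz => by
      have him := hz.2
      rw [mem_preimage, uIcc_of_le (by linarith)] at him
      exact him.1)
  have hside : ∀ s : ℝ, |s| = R → ‖∫ y in ε..(ε + R), G (s + y * Complex.I)‖ ≤ M * R := by
    intro s hs
    have h := intervalIntegral.norm_integral_le_of_norm_le_const (a := ε) (b := ε + R)
      (f := fun y : ℝ => G (s + y * Complex.I)) (C := M) fun y hy => by
        rw [uIoc_of_le (by linarith)] at hy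
        exact hM _ (by simpa using hy.1.le) (Or.inl (by simpa using hs))
    rwa [add_sub_cancel_left, abs_of_nonneg hR] at h
  have htop : ‖∫ x in (-R)..R, G (x + ((ε + R : ℝ) : ℂ) * Complex.I)‖ ≤ M * (2 * R) := by
    have h := intervalIntegral.norm_integral_le_of_norm_le_const (a := -R) (b := R)
      (f := fun x : ℝ => G (x + ((ε + R : ℝ) : ℂ) * Complex.I)) (C := M) fun x _ =>
        hM _ (by simpa using hR) (Or.inr (by simp))
    rwa [sub_neg_eq_add, ← two_mul, abs_of_nonneg (by positivity)] at h
  have hr := hside R (abs_of_nonneg hR)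
  have hl := hside (-R) (by rw [abs_neg, abs_of_nonneg hR])
  dsimp only at hrect
  set J := ∫ x in (-R)..R, G (x + (ε : ℂ) * Complex.I)
  set Jtop := ∫ x in (-R)..R, G (x + ((ε + R : ℝ) : ℂ) * Complex.I)
  set Jr := ∫ y in ε..(ε + R), G ((R : ℂ) + y * Complex.I)
  set Jl := ∫ y in ε..(ε + R), G (((-R : ℝ) : ℂ) + y * Complex.I)
  have hJ : J = Jtop - Complex.I • Jr + Complex.I • Jl := by
    rw [← sub_eq_zero, ← hrect]; abel
  calc ‖J‖ ≤ ‖Jtop‖ + ‖Complex.I • Jr‖ + ‖Complex.I • Jl‖ := by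
        rw [hJ]; exact (norm_add_le _ _).trans (add_le_add_left (norm_sub_le _ _) _)
    _ ≤ M * (2 * R) + M * R + M * R := by
        rw [norm_smul, norm_smul, Complex.norm_I, one_mul, one_mul]; gcongr
    _ = 4 * (M * R) := by ring

lemma integral_horizontal_line_eq_zero {E : Type*} [NormedAddCommGroup E] [NormedSpace ℂ E]
    [CompleteSpace E] {G : ℂ → E} {ε K p : ℝ} (hε : 0 ≤ ε) (hp : 1 < p)
    (hG : DifferentiableOn ℂ G {z | ε ≤ z.im})
    (hK : ∀ z : ℂ, ε ≤ z.im → ‖G z‖ ≤ K * (1 + ‖z‖) ^ (-p))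
    (hint : Integrable fun x : ℝ => G (x + ε * Complex.I)) :
    ∫ x : ℝ, G (x + ε * Complex.I) = 0 := by
  have hK0 : 0 ≤ K := by
    have h := (norm_nonneg _).trans (hK (ε * Complex.I) (by simp))
    exact nonneg_of_mul_nonneg_left h (by positivity)
  have hbound : ∀ R : ℝ, 0 < R →
      ‖∫ x in (-R)..R, G (x + ε * Complex.I)‖ ≤ 4 * (K * R ^ (1 - p)) := by
    intro R hR
    have h := norm_integral_boundary_rect_le (M := K * R ^ (-p)) hR.le hG fun z hz hzR => by
      refine (hK z hz).trans ?_
      have hRz : R ≤ ‖z‖ := by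
        rcases hzR with hre | him
        · exact hre ▸ Complex.abs_re_le_norm z
        · exact le_trans (by linarith) ((le_abs_self _).trans (Complex.abs_im_le_norm z))
      exact mul_le_mul_of_nonneg_left
        (Real.rpow_le_rpow_of_nonpos hR (by linarith) (by linarith)) hK0
    rwa [mul_assoc, ← Real.rpow_add_one hR.ne', neg_add_eq_sub] at h
  have hzero : Tendsto (fun R : ℝ => 4 * (K * R ^ (1 - p))) atTop (𝓝 0) := by
    have h := tendsto_rpow_neg_atTop (y := p - 1) (by linarith)
    rw [neg_sub] at h
    simpa using (h.const_mul K).const_mul 4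
  have hlim := intervalIntegral_tendsto_integral hint tendsto_neg_atTop_atBot tendsto_id
  refine tendsto_nhds_unique hlim (squeeze_zero_norm' ?_ hzero)
  filter_upwards [eventually_gt_atTop 0] with R hR using hbound R hR

/-- The Cauchy transform `∫ i g(t) / (z - t) dt` of a function on the line. -/
noncomputable def cauchyTransform (g : ℝ → ℝ) (z : ℂ) : ℂ :=
  ∫ t : ℝ, (g t : ℂ) * (Complex.I / (z - t))

/-- The Poisson integral of `g` at height `ε`, normalised so that its kernel has mass `π`. -/
noncomputable def poissonInt (ε : ℝ) (g : ℝ → ℝ) (x : ℝ) : ℝ :=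
  ∫ t : ℝ, g t * (ε / ((x - t) ^ 2 + ε ^ 2))

/-- The conjugate Poisson integral of `g` at height `ε`, with the normalisation of `poissonInt`;
it is the regularisation at scale `ε` of `π` times the Hilbert transform of `g`. -/
noncomputable def conjPoissonInt (ε : ℝ) (g : ℝ → ℝ) (x : ℝ) : ℝ :=
  ∫ t : ℝ, g t * ((x - t) / ((x - t) ^ 2 + ε ^ 2))

section CauchyTransform

variable {g : ℝ → ℝ} {ε : ℝ}

lemma integrable_mul_poissonKernel (hg : Integrable g) (hε : 0 < ε) (x : ℝ) :
    Integrable fun t => g t * (ε / ((x - t) ^ 2 + ε ^ 2)) := by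
  refine hg.mul_bdd (c := 1 / ε) (Measurable.aestronglyMeasurable (by fun_prop))
    (Eventually.of_forall fun t => ?_)
  rw [Real.norm_of_nonneg (by positivity), div_le_div_iff₀ (by positivity) hε]
  nlinarith [sq_nonneg (x - t)]

lemma integrable_mul_conjPoissonKernel (hg : Integrable g) (hε : 0 < ε) (x : ℝ) :
    Integrable fun t => g t * ((x - t) / ((x - t) ^ 2 + ε ^ 2)) := by
  refine hg.mul_bdd (c := 1 / ε) (Measurable.aestronglyMeasurable (by fun_prop))
    (Eventually.of_forall fun t => ?_)
  rw [norm_div, Real.norm_eq_abs, Real.norm_of_nonneg (by positivity),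
    div_le_div_iff₀ (by positivity) hε, ← sq_abs]
  nlinarith [sq_nonneg (|x - t| - ε), abs_nonneg (x - t)]

lemma I_div_sub_eq (hε : 0 < ε) (x t : ℝ) :
    Complex.I / (x + ε * Complex.I - t) =
      ((ε / ((x - t) ^ 2 + ε ^ 2) : ℝ) : ℂ) +
        (((x - t) / ((x - t) ^ 2 + ε ^ 2) : ℝ) : ℂ) * Complex.I := by
  have hden : ((x : ℂ) - t) ^ 2 + (ε : ℂ) ^ 2 ≠ 0 := by
    exact_mod_cast show (x - t) ^ 2 + ε ^ 2 ≠ 0 by positivity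
  have hne : (x : ℂ) + ε * Complex.I - t ≠ 0 := fun h =>
    hε.ne' (by simpa using congrArg Complex.im h)
  push_cast
  rw [div_mul_eq_mul_div, ← add_div, div_eq_div_iff hne hden]
  linear_combination -((x : ℂ) - t) * ε * Complex.I_sq

lemma cauchyTransform_add_mul_I (hg : Integrable g) (hε : 0 < ε) (x : ℝ) :
    cauchyTransform g (x + ε * Complex.I) =
      poissonInt ε g x + conjPoissonInt ε g x * Complex.I := by
  rw [cauchyTransform, poissonInt, conjPoissonInt, ← integral_complex_ofReal,
    ← integral_complex_ofReal, ← integral_mul_const,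
    ← integral_add (integrable_mul_poissonKernel hg hε x).ofReal
      ((integrable_mul_conjPoissonKernel hg hε x).ofReal.mul_const _)]
  refine integral_congr_ae (Eventually.of_forall fun t => ?_)
  dsimp only
  rw [I_div_sub_eq hε]
  push_cast
  ring

lemma cauchyTransform_re (hg : Integrable g) (hε : 0 < ε) (x : ℝ) :
    (cauchyTransform g (x + ε * Complex.I)).re = poissonInt ε g x := by
  simp [cauchyTransform_add_mul_I hg hε]

lemma cauchyTransform_im (hg : Integrable g) (hε : 0 < ε) (x : ℝ) :
    (cauchyTransform g (x + ε * Complex.I)).im = conjPoissonInt ε g x := by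
  simp [cauchyTransform_add_mul_I hg hε]

lemma poissonInt_pos (hg : Integrable g) (hg0 : 0 ≤ g) (hne : ¬ g =ᵐ[volume] 0) (hε : 0 < ε)
    (x : ℝ) : 0 < poissonInt ε g x := by
  have hnonneg : ∀ t, 0 ≤ g t * (ε / ((x - t) ^ 2 + ε ^ 2)) := fun t =>
    mul_nonneg (hg0 t) (by positivity)
  refine lt_of_le_of_ne (integral_nonneg hnonneg) fun h => hne ?_
  filter_upwards [(integral_eq_zero_iff_of_nonneg hnonneg
    (integrable_mul_poissonKernel hg hε x)).1 h.symm] with t ht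
  exact (mul_eq_zero.1 ht).resolve_right (by positivity)

lemma cauchyTransform_re_pos (hg : Integrable g) (hg0 : 0 ≤ g) (hne : ¬ g =ᵐ[volume] 0) {z : ℂ}
    (hz : 0 < z.im) : 0 < (cauchyTransform g z).re := by
  rw [← Complex.re_add_im z, cauchyTransform_re hg hz]
  exact poissonInt_pos hg hg0 hne hz z.re

lemma cauchyTransform_eq_resolventTransform (hg : Integrable g) (hg0 : 0 ≤ g) (z : ℂ) :
    cauchyTransform g z = -Complex.I *
      resolventTransform (volume.withDensity fun t => ENNReal.ofReal (g t)) z := by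
  rw [resolventTransform_apply, integral_withDensity_eq_integral_toReal_smul₀
    hg.aemeasurable.ennreal_ofReal (Eventually.of_forall fun t => ENNReal.ofReal_lt_top),
    ← integral_const_mul]
  refine integral_congr_ae (Eventually.of_forall fun t => ?_)
  simp only [ENNReal.toReal_ofReal (hg0 t), resolvent, Ring.inverse_eq_inv', Complex.coe_algebraMap,
    Complex.real_smul, div_eq_mul_inv, ← neg_sub (t : ℂ) z, inv_neg]
  ring

lemma differentiableAt_cauchyTransform (hg : Integrable g) (hg0 : 0 ≤ g) {z : ℂ} (hz : 0 < z.im) :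
    DifferentiableAt ℂ (cauchyTransform g) z := by
  have hfin := isFiniteMeasure_withDensity_ofReal hg.2
  have hz' : z ∉ algebraMap ℝ ℂ ''
      (volume.withDensity fun t => ENNReal.ofReal (g t)).support := by
    rintro ⟨t, -, rfl⟩
    simp at hz
  rw [funext (cauchyTransform_eq_resolventTransform hg hg0)]
  exact (hasDerivAt_resolventTransform z hz').differentiableAt.const_mul _

lemma continuous_cauchyTransform_line (hg : Integrable g) (hg0 : 0 ≤ g) (hε : 0 < ε) :
    Continuous fun x : ℝ => cauchyTransform g (x + ε * Complex.I) := by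
  refine continuous_iff_continuousAt.2 fun x => ?_
  have hF : ContinuousAt (cauchyTransform g) ((x : ℂ) + ε * Complex.I) :=
    (differentiableAt_cauchyTransform hg hg0 (by simpa using hε)).continuousAt
  exact ContinuousAt.comp (f := fun x : ℝ => (x : ℂ) + ε * Complex.I) hF (by fun_prop)

lemma exists_norm_cauchyTransform_le (hg : Integrable g)
    (hsupp : Bornology.IsBounded (Function.support g)) (hε : 0 < ε) :
    ∃ K, 0 ≤ K ∧ ∀ z : ℂ, ε ≤ z.im → ‖cauchyTransform g z‖ ≤ K * (1 + ‖z‖)⁻¹ := by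
  obtain ⟨R, hR, hgR⟩ := hsupp.exists_pos_norm_le
  refine ⟨∫ t, ‖g t‖ * ((1 + R) / ε + 1), by positivity, fun z hz => ?_⟩
  rw [← integral_mul_const]
  refine norm_integral_le_of_norm_le ((hg.norm.mul_const _).mul_const _)
    (Eventually.of_forall fun t => ?_)
  rw [norm_mul, norm_div, Complex.norm_I, Complex.norm_real, mul_assoc, ← div_eq_mul_inv]
  by_cases ht : g t = 0
  · simp [ht]
  have him : ε ≤ ‖z - t‖ := hz.trans <| (le_abs_self _).trans <| by
    simpa using Complex.abs_im_le_norm (z - t)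
  have hdist : 1 + ‖z‖ ≤ ((1 + R) / ε + 1) * ‖z - t‖ :=
    calc 1 + ‖z‖ ≤ 1 + (‖z - t‖ + ‖(t : ℂ)‖) := by gcongr; exact norm_le_norm_sub_add z t
      _ ≤ 1 + (‖z - t‖ + R) := by gcongr; simpa using hgR t ht
      _ = (1 + R) / ε * ε + ‖z - t‖ := by field_simp; ring
      _ ≤ (1 + R) / ε * ‖z - t‖ + ‖z - t‖ := by gcongr
      _ = _ := by ring
  refine mul_le_mul_of_nonneg_left ?_ (norm_nonneg _)
  rw [div_le_div_iff₀ (hε.trans_le him) (by positivity), one_mul]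
  exact hdist

end CauchyTransform

lemma lintegral_mul_rpow_le {α : Type*} [MeasurableSpace α] {μ : Measure α} {p : ℝ} (hp : 1 ≤ p)
    {g k : α → ℝ≥0∞} (hg : AEMeasurable g μ) (hk : AEMeasurable k μ) :
    (∫⁻ t, g t * k t ∂μ) ^ p ≤ (∫⁻ t, k t ∂μ) ^ (p - 1) * ∫⁻ t, g t ^ p * k t ∂μ := by
  have hp0 : 0 < p := by linarith
  have hq0 : 0 ≤ 1 - p⁻¹ := sub_nonneg.2 (inv_le_one_of_one_le₀ hp)
  have hsplit : ∀ t, g t * k t = (g t ^ p * k t) ^ p⁻¹ * k t ^ (1 - p⁻¹) := fun t => by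
    rw [ENNReal.mul_rpow_of_nonneg _ _ (inv_nonneg.2 hp0.le), ENNReal.rpow_rpow_inv hp0.ne',
      mul_assoc, ← ENNReal.rpow_add_of_nonneg _ _ (inv_nonneg.2 hp0.le) hq0, add_sub_cancel,
      ENNReal.rpow_one]
  have hHolder := ENNReal.lintegral_mul_norm_pow_le ((hg.pow_const p).mul hk) hk
    (inv_nonneg.2 hp0.le) hq0 (add_sub_cancel _ _)
  rw [lintegral_congr hsplit]
  refine (ENNReal.rpow_le_rpow hHolder hp0.le).trans_eq ?_
  rw [ENNReal.mul_rpow_of_nonneg _ _ hp0.le, ENNReal.rpow_inv_rpow hp0.ne', ← ENNReal.rpow_mul,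
    sub_mul, one_mul, inv_mul_cancel₀ hp0.ne', mul_comm]
  rfl

lemma lintegral_lconvolution_rpow_le {G : Type*} [AddCommGroup G] [MeasurableSpace G]
    [MeasurableAdd₂ G] [MeasurableNeg G] {μ : Measure G} [SFinite μ] [μ.IsAddLeftInvariant]
    [μ.IsNegInvariant] {p : ℝ} (hp : 1 ≤ p) {f k : G → ℝ≥0∞} (hf : AEMeasurable f μ)
    (hk : AEMeasurable k μ) :
    ∫⁻ x, (f ⋆ₗ[μ] k) x ^ p ∂μ ≤ (∫⁻ x, k x ∂μ) ^ p * ∫⁻ x, f x ^ p ∂μ := by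
  have hksub : AEMeasurable (fun q : G × G => k (-q.2 + q.1)) (μ.prod μ) :=
    hk.comp_quasiMeasurePreserving (by
      simpa only [sub_eq_neg_add] using quasiMeasurePreserving_sub_of_right_invariant μ μ)
  have hpoint : ∀ x, (f ⋆ₗ[μ] k) x ^ p ≤
      (∫⁻ y, k y ∂μ) ^ (p - 1) * ∫⁻ y, f y ^ p * k (-y + x) ∂μ := fun x => by
    have hkx : AEMeasurable (fun y => k (-y + x)) μ := hk.comp_quasiMeasurePreserving (by
      simpa only [sub_eq_neg_add] using quasiMeasurePreserving_sub_left μ x)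
    have h := lintegral_mul_rpow_le hp hf hkx
    simpa only [← sub_eq_neg_add, lintegral_sub_left_eq_self k x, lconvolution_def] using h
  have hinner : ∀ y, ∫⁻ x, f y ^ p * k (-y + x) ∂μ = f y ^ p * ∫⁻ x, k x ∂μ := fun y => by
    have hky : AEMeasurable (fun x => k (-y + x)) μ :=
      hk.comp_quasiMeasurePreserving (quasiMeasurePreserving_add_left μ (-y))
    rw [lintegral_const_mul'' _ hky, lintegral_add_left_eq_self k (-y)]
  calc ∫⁻ x, (f ⋆ₗ[μ] k) x ^ p ∂μ
      ≤ ∫⁻ x, (∫⁻ y, k y ∂μ) ^ (p - 1) * ∫⁻ y, f y ^ p * k (-y + x) ∂μ ∂μ := lintegral_mono hpoint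
    _ = (∫⁻ y, k y ∂μ) ^ (p - 1) * ∫⁻ y, ∫⁻ x, f y ^ p * k (-y + x) ∂μ ∂μ := by
        have hprod := (hf.pow_const p).comp_snd (μ := μ) |>.mul hksub
        rw [← lintegral_lintegral_swap hprod]
        exact lintegral_const_mul'' _ hprod.lintegral_prod_right'
    _ = (∫⁻ x, k x ∂μ) ^ p * ∫⁻ x, f x ^ p ∂μ := by
        simp only [hinner]
        rw [lintegral_mul_const'' _ (hf.pow_const p), mul_comm (∫⁻ x, f x ^ p ∂μ), ← mul_assoc]
        congr 1
        nth_rw 2 [← ENNReal.rpow_one (∫⁻ x, k x ∂μ)]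
        rw [← ENNReal.rpow_add_of_nonneg _ _ (by linarith) zero_le_one, sub_add_cancel]

lemma lintegral_poissonKernel {ε : ℝ} (hε : 0 < ε) :
    ∫⁻ s : ℝ, ENNReal.ofReal (ε / (s ^ 2 + ε ^ 2)) = ENNReal.ofReal Real.pi := by
  have hscale : ∀ s : ℝ, ε / (s ^ 2 + ε ^ 2) = ε⁻¹ * (1 + (s / ε) ^ 2)⁻¹ := fun s => by
    field_simp
    ring
  simp only [hscale]
  rw [← ofReal_integral_eq_lintegral_ofReal
      ((integrable_inv_one_add_sq.comp_div hε.ne').const_mul _)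
      (Eventually.of_forall fun s => by positivity),
    integral_const_mul, Measure.integral_comp_div (fun s : ℝ => (1 + s ^ 2)⁻¹) ε,
    integral_univ_inv_one_add_sq, abs_of_pos hε, smul_eq_mul, inv_mul_cancel_left₀ hε.ne']

lemma eLpNorm_eq_ofReal_integral_norm_rpow {α E : Type*} [MeasurableSpace α] {μ : Measure α}
    [NormedAddCommGroup E] {p : ℝ} (hp : 0 < p) {f : α → E}
    (hf : Integrable (fun x => ‖f x‖ ^ p) μ) :
    eLpNorm f (ENNReal.ofReal p) μ = ENNReal.ofReal ((∫ x, ‖f x‖ ^ p ∂μ) ^ p⁻¹) := by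
  rw [eLpNorm_eq_lintegral_rpow_enorm_toReal (ENNReal.ofReal_pos.2 hp).ne' ENNReal.ofReal_ne_top,
    ENNReal.toReal_ofReal hp.le, one_div,
    ← ENNReal.ofReal_rpow_of_nonneg (by positivity) (by positivity),
    ofReal_integral_eq_lintegral_ofReal hf (Eventually.of_forall fun x => by positivity)]
  congr 1
  refine lintegral_congr fun x => ?_
  rw [← ofReal_norm, ENNReal.ofReal_rpow_of_nonneg (norm_nonneg _) hp.le]

section ConjPoissonBound

variable {g : ℝ → ℝ} {ε p : ℝ}

lemma enorm_poissonInt_le_lconvolution (g : ℝ → ℝ) (hε : 0 < ε) (x : ℝ) :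
    ‖poissonInt ε g x‖ₑ ≤
      ((fun t => ‖g t‖ₑ) ⋆ₗ fun s : ℝ => ENNReal.ofReal (ε / (s ^ 2 + ε ^ 2))) x := by
  refine (enorm_integral_le_lintegral_enorm _).trans_eq (lintegral_congr fun t => ?_)
  rw [enorm_mul, neg_add_eq_sub]
  exact congrArg _ (Real.enorm_of_nonneg (by positivity))

lemma eLpNorm_poissonInt_le (hp : 1 ≤ p) (hg : AEMeasurable g) (hε : 0 < ε) :
    eLpNorm (poissonInt ε g) (ENNReal.ofReal p) ≤
      ENNReal.ofReal Real.pi * eLpNorm g (ENNReal.ofReal p) := by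
  have hp0 : 0 < p := by linarith
  have hp' : ENNReal.ofReal p ≠ 0 := (ENNReal.ofReal_pos.2 hp0).ne'
  have hYoung := lintegral_lconvolution_rpow_le (μ := volume) hp hg.enorm
    (k := fun s : ℝ => ENNReal.ofReal (ε / (s ^ 2 + ε ^ 2))) (by fun_prop)
  rw [lintegral_poissonKernel hε] at hYoung
  rw [eLpNorm_eq_lintegral_rpow_enorm_toReal hp' ENNReal.ofReal_ne_top,
    eLpNorm_eq_lintegral_rpow_enorm_toReal hp' ENNReal.ofReal_ne_top, ENNReal.toReal_ofReal hp0.le,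
    one_div]
  calc (∫⁻ x, ‖poissonInt ε g x‖ₑ ^ p) ^ p⁻¹
      ≤ (ENNReal.ofReal Real.pi ^ p * ∫⁻ x, ‖g x‖ₑ ^ p) ^ p⁻¹ := by
        refine ENNReal.rpow_le_rpow (le_trans (lintegral_mono fun x => ?_) hYoung) (by positivity)
        gcongr
        exact enorm_poissonInt_le_lconvolution g hε x
    _ = _ := by
        rw [ENNReal.mul_rpow_of_nonneg _ _ (by positivity), ENNReal.rpow_rpow_inv hp0.ne']

lemma continuous_poissonInt_of_nonneg (hg : Integrable g) (hg0 : 0 ≤ g) (hε : 0 < ε) :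
    Continuous (poissonInt ε g) :=
  (Complex.continuous_re.comp (continuous_cauchyTransform_line hg hg0 hε)).congr
    (cauchyTransform_re hg hε)

lemma continuous_conjPoissonInt_of_nonneg (hg : Integrable g) (hg0 : 0 ≤ g) (hε : 0 < ε) :
    Continuous (conjPoissonInt ε g) :=
  (Complex.continuous_im.comp (continuous_cauchyTransform_line hg hg0 hε)).congr
    (cauchyTransform_im hg hε)

lemma exists_norm_cauchyTransform_rpow_le (hp : 0 ≤ p) (hg : Integrable g)
    (hsupp : Bornology.IsBounded (Function.support g)) (hε : 0 < ε) :
    ∃ K, 0 ≤ K ∧ ∀ z : ℂ, ε ≤ z.im → ‖cauchyTransform g z‖ ^ p ≤ K * (1 + ‖z‖) ^ (-p) := by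
  obtain ⟨K, hK, hbound⟩ := exists_norm_cauchyTransform_le hg hsupp hε
  refine ⟨K ^ p, by positivity, fun z hz => ?_⟩
  rw [Real.rpow_neg (by positivity), ← Real.inv_rpow (by positivity),
    ← Real.mul_rpow hK (by positivity)]
  exact Real.rpow_le_rpow (norm_nonneg _) (hbound z hz) hp

lemma integrable_of_norm_le_norm_cauchyTransform_rpow {E : Type*} [NormedAddCommGroup E]
    {φ : ℝ → E} (hp : 1 < p) (hg : Integrable g)
    (hsupp : Bornology.IsBounded (Function.support g)) (hε : 0 < ε) (hφ : Continuous φ)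
    (hle : ∀ x : ℝ, ‖φ x‖ ≤ ‖cauchyTransform g (x + ε * Complex.I)‖ ^ p) : Integrable φ := by
  obtain ⟨K, hK, hbound⟩ :=
    exists_norm_cauchyTransform_rpow_le (zero_le_one.trans hp.le) hg hsupp hε
  refine ((integrable_one_add_norm (r := p) (by simpa using hp)).const_mul K).mono'
    hφ.aestronglyMeasurable (Eventually.of_forall fun x => ?_)
  have hx : ‖x‖ ≤ ‖(x : ℂ) + ε * Complex.I‖ := by
    simpa using Complex.abs_re_le_norm ((x : ℂ) + ε * Complex.I)
  calc ‖φ x‖ ≤ K * (1 + ‖(x : ℂ) + ε * Complex.I‖) ^ (-p) :=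
        (hle x).trans (hbound _ (by simp))
    _ ≤ K * (1 + ‖x‖) ^ (-p) := mul_le_mul_of_nonneg_left
        (Real.rpow_le_rpow_of_nonpos (by positivity) (by linarith) (by linarith)) hK

lemma integrable_norm_poissonInt_rpow (hp : 1 < p) (hg : Integrable g) (hg0 : 0 ≤ g)
    (hsupp : Bornology.IsBounded (Function.support g)) (hε : 0 < ε) :
    Integrable fun x => ‖poissonInt ε g x‖ ^ p := by
  refine integrable_of_norm_le_norm_cauchyTransform_rpow hp hg hsupp hε
    ((continuous_poissonInt_of_nonneg hg hg0 hε).norm.rpow_const fun x => Or.inr (by linarith))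
    fun x => ?_
  rw [Real.norm_of_nonneg (by positivity), ← cauchyTransform_re hg hε]
  exact Real.rpow_le_rpow (norm_nonneg _) (Complex.abs_re_le_norm _) (by linarith)

lemma integrable_norm_conjPoissonInt_rpow (hp : 1 < p) (hg : Integrable g) (hg0 : 0 ≤ g)
    (hsupp : Bornology.IsBounded (Function.support g)) (hε : 0 < ε) :
    Integrable fun x => ‖conjPoissonInt ε g x‖ ^ p := by
  refine integrable_of_norm_le_norm_cauchyTransform_rpow hp hg hsupp hε
    ((continuous_conjPoissonInt_of_nonneg hg hg0 hε).norm.rpow_const fun x => Or.inr (by linarith))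
    fun x => ?_
  rw [Real.norm_of_nonneg (by positivity), ← cauchyTransform_im hg hε]
  exact Real.rpow_le_rpow (norm_nonneg _) (Complex.abs_im_le_norm _) (by linarith)

lemma integrable_cauchyTransform_cpow (hp : 1 < p) (hg : Integrable g) (hg0 : 0 ≤ g)
    (hne : ¬ g =ᵐ[volume] 0) (hsupp : Bornology.IsBounded (Function.support g)) (hε : 0 < ε) :
    Integrable fun x : ℝ => cauchyTransform g (x + ε * Complex.I) ^ (p : ℂ) :=
  integrable_of_norm_le_norm_cauchyTransform_rpow hp hg hsupp hε
    ((continuous_cauchyTransform_line hg hg0 hε).cpow continuous_const fun x =>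
      Or.inl (cauchyTransform_re_pos hg hg0 hne (by simpa using hε)))
    fun x => (Complex.norm_cpow_real _ _).le

lemma integral_cauchyTransform_cpow_eq_zero (hp : 1 < p) (hg : Integrable g) (hg0 : 0 ≤ g)
    (hne : ¬ g =ᵐ[volume] 0) (hsupp : Bornology.IsBounded (Function.support g)) (hε : 0 < ε) :
    ∫ x : ℝ, cauchyTransform g (x + ε * Complex.I) ^ (p : ℂ) = 0 := by
  obtain ⟨K, -, hK⟩ := exists_norm_cauchyTransform_rpow_le (by linarith : 0 ≤ p) hg hsupp hε
  refine integral_horizontal_line_eq_zero (G := fun z => cauchyTransform g z ^ (p : ℂ)) (K := K)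
    hε.le hp (fun z hz => ?_) (fun z hz => (Complex.norm_cpow_real _ _).trans_le (hK z hz))
    (integrable_cauchyTransform_cpow hp hg hg0 hne hsupp hε)
  have hz' : 0 < z.im := hε.trans_le hz
  exact ((differentiableAt_cauchyTransform hg hg0 hz').cpow_const
    (Or.inl (cauchyTransform_re_pos hg hg0 hne hz'))).differentiableWithinAt

lemma integral_norm_conjPoissonInt_rpow_le {A B : ℝ} (hp : 1 < p)
    (hAB : ∀ z : ℂ, 0 < z.re → |z.im| ^ p ≤ A * z.re ^ p - B * (z ^ (p : ℂ)).re)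
    (hg : Integrable g) (hg0 : 0 ≤ g) (hne : ¬ g =ᵐ[volume] 0)
    (hsupp : Bornology.IsBounded (Function.support g)) (hε : 0 < ε) :
    ∫ x, ‖conjPoissonInt ε g x‖ ^ p ≤ A * ∫ x, ‖poissonInt ε g x‖ ^ p := by
  have hu := (integrable_norm_poissonInt_rpow hp hg hg0 hsupp hε).const_mul A
  have hG := integrable_cauchyTransform_cpow hp hg hg0 hne hsupp hε
  have hGre : ∫ x : ℝ, (cauchyTransform g (x + ε * Complex.I) ^ (p : ℂ)).re = 0 := by
    have h := Complex.reCLM.integral_comp_comm hG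
    rwa [integral_cauchyTransform_cpow_eq_zero hp hg hg0 hne hsupp hε, map_zero] at h
  calc ∫ x, ‖conjPoissonInt ε g x‖ ^ p
      ≤ ∫ x, (A * ‖poissonInt ε g x‖ ^ p -
          B * (cauchyTransform g (x + ε * Complex.I) ^ (p : ℂ)).re) := by
        refine integral_mono (integrable_norm_conjPoissonInt_rpow hp hg hg0 hsupp hε)
          (hu.sub (hG.re.const_mul B)) fun x => ?_
        have h := hAB _ (cauchyTransform_re_pos (z := x + ε * Complex.I) hg hg0 hne
          (by simpa using hε))
        rwa [cauchyTransform_re hg hε, cauchyTransform_im hg hε,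
          ← Real.norm_eq_abs, ← Real.norm_of_nonneg (poissonInt_pos hg hg0 hne hε x).le] at h
    _ = A * ∫ x, ‖poissonInt ε g x‖ ^ p := by
        rw [integral_sub hu (hG.re.const_mul B : Integrable fun x : ℝ => B * Complex.re _),
          integral_const_mul, integral_const_mul, hGre, mul_zero, sub_zero]

lemma conjPoissonInt_of_ae_eq_zero (hg : g =ᵐ[volume] 0) (ε : ℝ) : conjPoissonInt ε g = 0 := by
  funext x
  refine integral_eq_zero_of_ae ?_
  filter_upwards [hg] with t ht
  simp [ht]

lemma eLpNorm_conjPoissonInt_le_of_nonneg {A B : ℝ} (hp : 1 < p) (hA : 0 ≤ A)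
    (hAB : ∀ z : ℂ, 0 < z.re → |z.im| ^ p ≤ A * z.re ^ p - B * (z ^ (p : ℂ)).re)
    (hg : Integrable g) (hg0 : 0 ≤ g) (hsupp : Bornology.IsBounded (Function.support g))
    (hε : 0 < ε) :
    eLpNorm (conjPoissonInt ε g) (ENNReal.ofReal p) ≤
      ENNReal.ofReal (A ^ p⁻¹ * Real.pi) * eLpNorm g (ENNReal.ofReal p) := by
  have hp0 : 0 < p := by linarith
  by_cases hne : g =ᵐ[volume] 0
  · simp [conjPoissonInt_of_ae_eq_zero hne]
  have hconj : eLpNorm (conjPoissonInt ε g) (ENNReal.ofReal p) ≤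
      ENNReal.ofReal (A ^ p⁻¹) * eLpNorm (poissonInt ε g) (ENNReal.ofReal p) := by
    rw [eLpNorm_eq_ofReal_integral_norm_rpow hp0
        (integrable_norm_conjPoissonInt_rpow hp hg hg0 hsupp hε),
      eLpNorm_eq_ofReal_integral_norm_rpow hp0 (integrable_norm_poissonInt_rpow hp hg hg0 hsupp hε),
      ← ENNReal.ofReal_mul (by positivity), ← Real.mul_rpow hA (by positivity)]
    gcongr
    exact integral_norm_conjPoissonInt_rpow_le hp hAB hg hg0 hne hsupp hε
  rw [ENNReal.ofReal_mul (by positivity), mul_assoc]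
  exact hconj.trans (by gcongr; exact eLpNorm_poissonInt_le hp.le hg.aemeasurable hε)

lemma conjPoissonInt_eq_posPart_sub_negPart (hg : Integrable g) (hε : 0 < ε) :
    conjPoissonInt ε g =
      conjPoissonInt ε (fun t => max (g t) 0) - conjPoissonInt ε (fun t => max (-g t) 0) := by
  funext x
  rw [Pi.sub_apply, conjPoissonInt, conjPoissonInt, conjPoissonInt,
    ← integral_sub (integrable_mul_conjPoissonKernel hg.pos_part hε x)
      (integrable_mul_conjPoissonKernel hg.neg_part hε x)]
  refine integral_congr_ae (Eventually.of_forall fun t => ?_)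
  dsimp only
  rw [← sub_mul, max_zero_sub_max_neg_zero_eq_self]

lemma continuous_conjPoissonInt (hg : Integrable g) (hε : 0 < ε) :
    Continuous (conjPoissonInt ε g) := by
  rw [conjPoissonInt_eq_posPart_sub_negPart hg hε]
  exact (continuous_conjPoissonInt_of_nonneg hg.pos_part (fun _ => le_max_right _ _) hε).sub
    (continuous_conjPoissonInt_of_nonneg hg.neg_part (fun _ => le_max_right _ _) hε)

lemma exists_eLpNorm_conjPoissonInt_le (hp : 1 < p) (hp2 : p ≤ 2) :
    ∃ C : ℝ, 0 ≤ C ∧ ∀ ε : ℝ, 0 < ε → ∀ g : ℝ → ℝ, Integrable g →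
      Bornology.IsBounded (Function.support g) →
      eLpNorm (conjPoissonInt ε g) (ENNReal.ofReal p) ≤
        ENNReal.ofReal C * eLpNorm g (ENNReal.ofReal p) := by
  obtain ⟨A, B, hA, hAB⟩ := exists_abs_im_rpow_le hp hp2
  refine ⟨2 * (A ^ p⁻¹ * Real.pi), by positivity, fun ε hε g hg hsupp => ?_⟩
  have hpart : ∀ φ : ℝ → ℝ, Integrable φ → 0 ≤ φ → (∀ t, φ t ≤ |g t|) →
      eLpNorm (conjPoissonInt ε φ) (ENNReal.ofReal p) ≤
        ENNReal.ofReal (A ^ p⁻¹ * Real.pi) * eLpNorm g (ENNReal.ofReal p) := by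
    intro φ hφ hφ0 hφg
    have hφsupp : Function.support φ ⊆ Function.support g := fun t ht h0 =>
      ht (le_antisymm (by simpa [h0] using hφg t) (hφ0 t))
    refine (eLpNorm_conjPoissonInt_le_of_nonneg hp hA hAB hφ hφ0 (hsupp.subset hφsupp) hε).trans ?_
    gcongr
    exact eLpNorm_mono fun t => (Real.norm_of_nonneg (hφ0 t)).trans_le (hφg t)
  rw [conjPoissonInt_eq_posPart_sub_negPart hg hε, ENNReal.ofReal_mul zero_le_two,
    ENNReal.ofReal_ofNat, two_mul, add_mul]
  refine (eLpNorm_sub_le (continuous_conjPoissonInt hg.pos_part hε).aestronglyMeasurable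
    (continuous_conjPoissonInt hg.neg_part hε).aestronglyMeasurable (by simpa using hp.le)).trans ?_
  exact add_le_add
    (hpart _ hg.pos_part (fun _ => le_max_right _ _) fun t =>
      max_le (le_abs_self _) (abs_nonneg _))
    (hpart _ hg.neg_part (fun _ => le_max_right _ _) fun t =>
      max_le (neg_le_abs _) (abs_nonneg _))

end ConjPoissonBound

/-! ### Partial sums -/

section PartialSums

variable {f g : ℝ → ℝ}

lemma integrable_mul_hermiteFun (hf : Integrable f) (k : ℕ) :
    Integrable fun y => f y * hermiteFun k y :=
  hf.mul_bdd (continuous_hermiteFun k).aestronglyMeasurable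
    (Eventually.of_forall fun y => Real.abs_le_sqrt (hermiteFun_sq_le k y))

lemma continuous_hermitePartialSum (n : ℕ) (f : ℝ → ℝ) : Continuous (hermitePartialSum n f) :=
  continuous_finsetSum _ fun k _ => continuous_const.mul (continuous_hermiteFun k)

lemma memLp_top_hermitePartialSum (n : ℕ) (f : ℝ → ℝ) (μ : Measure ℝ) :
    MemLp (hermitePartialSum n f) ∞ μ :=
  memLp_finsetSum _ fun k _ => (memLp_top_of_bound
    (continuous_hermiteFun k).aestronglyMeasurable _
    (Eventually.of_forall fun x => Real.abs_le_sqrt (hermiteFun_sq_le k x))).const_mul _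

lemma integrable_mul_hermiteKernel (hf : Integrable f) (n : ℕ) (x : ℝ) :
    Integrable fun y => f y * hermiteKernel n x y := by
  simp only [hermiteKernel, Finset.mul_sum, mul_left_comm (f _)]
  exact integrable_finsetSum _ fun k _ => (integrable_mul_hermiteFun hf k).const_mul _

lemma hermitePartialSum_eq_integral (hf : Integrable f) (n : ℕ) (x : ℝ) :
    hermitePartialSum n f x = ∫ y, f y * hermiteKernel n x y := by
  simp only [hermiteKernel, Finset.mul_sum, mul_left_comm (f _)]
  rw [integral_finsetSum _ fun k _ => (integrable_mul_hermiteFun hf k).const_mul _]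
  exact Finset.sum_congr rfl fun k _ => by rw [integral_const_mul, mul_comm]

lemma integral_hermitePartialSum_mul (f : ℝ → ℝ) (hg : Integrable g) (n : ℕ) :
    ∫ x, hermitePartialSum n f x * g x = ∑ k ∈ Finset.range (n + 1),
      (∫ y, f y * hermiteFun k y) * ∫ y, g y * hermiteFun k y := by
  simp only [hermitePartialSum, Finset.sum_mul, mul_assoc, mul_comm (hermiteFun _ _) (g _)]
  rw [integral_finsetSum _ fun k _ => (integrable_mul_hermiteFun hg k).const_mul _]
  simp only [integral_const_mul]

lemma integral_hermitePartialSum_mul_comm (hf : Integrable f) (hg : Integrable g) (n : ℕ) :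
    ∫ x, hermitePartialSum n f x * g x = ∫ x, f x * hermitePartialSum n g x := by
  simp only [mul_comm (f _) (hermitePartialSum n g _)]
  rw [integral_hermitePartialSum_mul f hg, integral_hermitePartialSum_mul g hf]
  simp only [mul_comm]

/-- The partial sum operator `S_n` with its kernel damped at scale `ε` near the diagonal. -/
noncomputable def hermiteRegularizedSum (n : ℕ) (ε : ℝ) (f : ℝ → ℝ) (x : ℝ) : ℝ :=
  ∫ y, f y * hermiteKernel n x y * ((x - y) ^ 2 / ((x - y) ^ 2 + ε ^ 2))

lemma hermiteRegularizedSum_eq (hf : Integrable f) (n : ℕ) {ε : ℝ} (hε : 0 < ε) (x : ℝ) :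
    hermiteRegularizedSum n ε f x = √(2 * (n + 1)) / 2 *
      (hermiteFun (n + 1) x * conjPoissonInt ε (fun y => f y * hermiteFun n y) x -
        hermiteFun n x * conjPoissonInt ε (fun y => f y * hermiteFun (n + 1) y) x) := by
  have hint : ∀ k l, Integrable fun y => hermiteFun k x *
      (f y * hermiteFun l y * ((x - y) / ((x - y) ^ 2 + ε ^ 2))) := fun k l =>
    (integrable_mul_conjPoissonKernel (integrable_mul_hermiteFun hf l) hε x).const_mul _
  rw [conjPoissonInt, conjPoissonInt, ← integral_const_mul, ← integral_const_mul,
    ← integral_sub (hint (n + 1) n) (hint n (n + 1)), ← integral_const_mul]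
  refine integral_congr_ae (Eventually.of_forall fun y => ?_)
  linear_combination f y * (x - y) / ((x - y) ^ 2 + ε ^ 2) * sub_mul_hermiteKernel n x y

lemma continuous_hermiteRegularizedSum (hf : Integrable f) (n : ℕ) {ε : ℝ} (hε : 0 < ε) :
    Continuous (hermiteRegularizedSum n ε f) := by
  have hconj := fun k => continuous_conjPoissonInt (integrable_mul_hermiteFun hf k) hε
  rw [funext (hermiteRegularizedSum_eq hf n hε)]
  exact continuous_const.mul (((continuous_hermiteFun _).mul (hconj n)).sub
    ((continuous_hermiteFun _).mul (hconj (n + 1))))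

lemma tendsto_hermiteRegularizedSum (hf : Integrable f) (n : ℕ) (x : ℝ) :
    Tendsto (fun ε => hermiteRegularizedSum n ε f x) (𝓝 0) (𝓝 (hermitePartialSum n f x)) := by
  have hint := integrable_mul_hermiteKernel hf n x
  rw [hermitePartialSum_eq_integral hf]
  refine tendsto_integral_filter_of_dominated_convergence _ (Eventually.of_forall fun ε => ?_)
    (Eventually.of_forall fun ε => Eventually.of_forall fun y => ?_) hint.norm ?_
  · exact hint.aestronglyMeasurable.mul (Measurable.aestronglyMeasurable (by fun_prop))
  · rw [norm_mul, Real.norm_of_nonneg (r := _ / _) (by positivity)]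
    exact mul_le_of_le_one_right (norm_nonneg _)
      (div_le_one_of_le₀ (le_add_of_nonneg_right (sq_nonneg ε)) (by positivity))
  · filter_upwards [compl_mem_ae_iff.2 (measure_singleton x)] with y hy
    have hxy : x - y ≠ 0 := sub_ne_zero.2 fun h => hy h.symm
    have hcont : ContinuousAt (fun ε : ℝ => f y * hermiteKernel n x y *
        ((x - y) ^ 2 / ((x - y) ^ 2 + ε ^ 2))) 0 := by
      fun_prop (disch := positivity)
    simpa [ContinuousAt, hxy] using hcont.tendsto

end PartialSums

section PartialSumBounds

variable {f : ℝ → ℝ} {s : Set ℝ} {n : ℕ} {a ε : ℝ} {p C : ℝ≥0∞}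

lemma eLpNorm_mul_le_of_abs_le {α : Type*} [MeasurableSpace α] {μ : Measure α} {s : Set α}
    {φ u : α → ℝ} {a : ℝ} (hs : MeasurableSet s) (hφ : ∀ x ∈ s, |φ x| ≤ a) (p : ℝ≥0∞) :
    eLpNorm (fun x => φ x * u x) p (μ.restrict s) ≤
      ENNReal.ofReal a * eLpNorm u p (μ.restrict s) := by
  refine eLpNorm_le_mul_eLpNorm_of_ae_le_mul ?_ p
  filter_upwards [ae_restrict_mem hs] with x hx
  rw [norm_mul]
  gcongr
  exact hφ x hx

lemma eLpNorm_hermiteFun_mul_conjPoissonInt_le {k l : ℕ} (hs : MeasurableSet s)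
    (hsb : Bornology.IsBounded s) (hk : ∀ x ∈ s, |hermiteFun k x| ≤ a)
    (hl : ∀ x ∈ s, |hermiteFun l x| ≤ a)
    (hC : ∀ g, Integrable g → Bornology.IsBounded (Function.support g) →
      eLpNorm (conjPoissonInt ε g) p ≤ C * eLpNorm g p) (hf : IntegrableOn f s) :
    eLpNorm (fun x => hermiteFun k x *
        conjPoissonInt ε (fun y => s.indicator f y * hermiteFun l y) x) p (volume.restrict s) ≤
      ENNReal.ofReal a * (C * (ENNReal.ofReal a * eLpNorm f p (volume.restrict s))) := by
  have hind : (fun y => s.indicator f y * hermiteFun l y) =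
      s.indicator fun y => hermiteFun l y * f y := by
    funext y
    by_cases hy : y ∈ s <;> simp [hy, mul_comm]
  have hsupp : Bornology.IsBounded
      (Function.support fun y => s.indicator f y * hermiteFun l y) :=
    hsb.subset (hind ▸ support_indicator_subset)
  have hint := integrable_mul_hermiteFun ((integrable_indicator_iff hs).2 hf) l
  calc _ ≤ ENNReal.ofReal a * eLpNorm (conjPoissonInt ε _) p (volume.restrict s) :=
        eLpNorm_mul_le_of_abs_le hs hk p
    _ ≤ ENNReal.ofReal a * (C * eLpNorm (fun y => s.indicator f y * hermiteFun l y) p) := by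
        gcongr
        exact (eLpNorm_mono_measure _ Measure.restrict_le_self).trans (hC _ hint hsupp)
    _ ≤ _ := by
        rw [hind, eLpNorm_indicator_eq_eLpNorm_restrict hs]
        gcongr
        exact eLpNorm_mul_le_of_abs_le hs hl p

lemma eLpNorm_hermiteRegularizedSum_le (hs : MeasurableSet s) (hsb : Bornology.IsBounded s)
    (ha : 0 ≤ a) (hna : ∀ x ∈ s, |hermiteFun n x| ≤ a ∧ |hermiteFun (n + 1) x| ≤ a) (hε : 0 < ε)
    (hp : 1 ≤ p) (hC : ∀ g, Integrable g → Bornology.IsBounded (Function.support g) →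
      eLpNorm (conjPoissonInt ε g) p ≤ C * eLpNorm g p) (hf : IntegrableOn f s) :
    eLpNorm (hermiteRegularizedSum n ε (s.indicator f)) p (volume.restrict s) ≤
      ENNReal.ofReal (√(2 * (n + 1)) * a ^ 2) * C * eLpNorm f p (volume.restrict s) := by
  have hfs := (integrable_indicator_iff hs).2 hf
  set u : ℕ → ℕ → ℝ → ℝ := fun k l x =>
    hermiteFun k x * conjPoissonInt ε (fun y => s.indicator f y * hermiteFun l y) x
  have hu : ∀ k l, AEStronglyMeasurable (u k l) (volume.restrict s) := fun k l =>
    ((continuous_hermiteFun k).mul (continuous_conjPoissonInt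
      (integrable_mul_hermiteFun hfs l) hε)).aestronglyMeasurable
  have hsum : hermiteRegularizedSum n ε (s.indicator f) =
      (√(2 * (n + 1)) / 2) • (u (n + 1) n - u n (n + 1)) :=
    funext fun x => hermiteRegularizedSum_eq hfs n hε x
  set N := eLpNorm f p (volume.restrict s)
  calc eLpNorm (hermiteRegularizedSum n ε (s.indicator f)) p (volume.restrict s)
      ≤ ENNReal.ofReal (√(2 * (n + 1)) / 2) * (ENNReal.ofReal a * (C * (ENNReal.ofReal a * N)) +
          ENNReal.ofReal a * (C * (ENNReal.ofReal a * N))) := by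
        rw [hsum, eLpNorm_const_smul, Real.enorm_of_nonneg (by positivity)]
        gcongr
        exact (eLpNorm_sub_le (hu _ _) (hu _ _) hp).trans (add_le_add
          (eLpNorm_hermiteFun_mul_conjPoissonInt_le hs hsb (fun x hx => (hna x hx).2)
            (fun x hx => (hna x hx).1) hC hf)
          (eLpNorm_hermiteFun_mul_conjPoissonInt_le hs hsb (fun x hx => (hna x hx).1)
            (fun x hx => (hna x hx).2) hC hf))
    _ = ENNReal.ofReal (√(2 * (n + 1)) / 2) * 2 * ENNReal.ofReal a * ENNReal.ofReal a * C * N := by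
        ring
    _ = ENNReal.ofReal (√(2 * (n + 1)) * a ^ 2) * C * N := by
        rw [← ENNReal.ofReal_ofNat 2, ← ENNReal.ofReal_mul (by positivity),
          ← ENNReal.ofReal_mul (by positivity), ← ENNReal.ofReal_mul (by positivity)]
        ring_nf

lemma eLpNorm_hermitePartialSum_le (hs : MeasurableSet s) (hsb : Bornology.IsBounded s)
    (ha : 0 ≤ a) (hna : ∀ x ∈ s, |hermiteFun n x| ≤ a ∧ |hermiteFun (n + 1) x| ≤ a) (hp : 1 ≤ p)
    (hC : ∀ ε : ℝ, 0 < ε → ∀ g, Integrable g → Bornology.IsBounded (Function.support g) →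
      eLpNorm (conjPoissonInt ε g) p ≤ C * eLpNorm g p) (hf : IntegrableOn f s) :
    eLpNorm (hermitePartialSum n (s.indicator f)) p (volume.restrict s) ≤
      ENNReal.ofReal (√(2 * (n + 1)) * a ^ 2) * C * eLpNorm f p (volume.restrict s) := by
  have hfs := (integrable_indicator_iff hs).2 hf
  have hpos : ∀ j : ℕ, 0 < 1 / ((j : ℝ) + 1) := fun j => by positivity
  have hlim : ∀ x, Tendsto
      (fun j : ℕ => hermiteRegularizedSum n (1 / ((j : ℝ) + 1)) (s.indicator f) x) atTop
      (𝓝 (hermitePartialSum n (s.indicator f) x)) := fun x =>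
    (tendsto_hermiteRegularizedSum hfs n x).comp tendsto_one_div_add_atTop_nhds_zero_nat
  calc eLpNorm (hermitePartialSum n (s.indicator f)) p (volume.restrict s)
      ≤ liminf (fun j : ℕ => eLpNorm (hermiteRegularizedSum n (1 / ((j : ℝ) + 1)) (s.indicator f))
          p (volume.restrict s)) atTop :=
        Lp.eLpNorm_lim_le_liminf_eLpNorm
          (fun j => (continuous_hermiteRegularizedSum hfs n (hpos j)).aestronglyMeasurable) _
          (Eventually.of_forall hlim)
    _ ≤ liminf (fun _ : ℕ => _) atTop := liminf_le_liminf <| Eventually.of_forall fun j =>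
        eLpNorm_hermiteRegularizedSum_le hs hsb ha hna (hpos j) hp (hC _ (hpos j)) hf
    _ = _ := liminf_const _

end PartialSumBounds

/-! ### Duality -/

section Duality

variable {p q : ℝ} {K : ℝ≥0∞}

lemma abs_mul_abs_rpow_sub_two (hq : 1 < q) (t : ℝ) : |t * |t| ^ (q - 2)| = |t| ^ (q - 1) := by
  rcases eq_or_ne t 0 with rfl | ht
  · simp [Real.zero_rpow (by linarith : q - 1 ≠ 0)]
  · rw [abs_mul, Real.abs_rpow_of_nonneg (abs_nonneg t), abs_abs, mul_comm,
      ← Real.rpow_add_one (abs_ne_zero.2 ht)]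
    ring_nf

lemma mul_mul_abs_rpow_sub_two (hq : 0 < q) (t : ℝ) : t * (t * |t| ^ (q - 2)) = |t| ^ q := by
  rcases eq_or_ne t 0 with rfl | ht
  · simp [Real.zero_rpow hq.ne']
  · rw [← mul_assoc, ← sq, ← sq_abs, ← Real.rpow_natCast, ← Real.rpow_add (abs_pos.2 ht)]
    norm_num

/- The test function is `g = u |u| ^ (q - 2)`, for which `u g = |g| ^ p = |u| ^ q`. -/
lemma eLpNorm_le_of_forall_integral_mul_le {α : Type*} [MeasurableSpace α] {μ : Measure α}
    [IsFiniteMeasure μ] (hpq : p.HolderConjugate q) {u : α → ℝ} (hu : MemLp u ∞ μ)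
    (h : ∀ g, MemLp g ∞ μ →
      ENNReal.ofReal (∫ x, u x * g x ∂μ) ≤ K * eLpNorm g (ENNReal.ofReal p) μ) :
    eLpNorm u (ENNReal.ofReal q) μ ≤ K := by
  have hp := hpq.pos
  have hq := hpq.symm.lt
  set g : α → ℝ := fun x => u x * |u x| ^ (q - 2)
  have hg_norm : ∀ x, ‖g x‖ = |u x| ^ (q - 1) := fun x => abs_mul_abs_rpow_sub_two hq (u x)
  have hug : ∀ x, u x * g x = |u x| ^ q := fun x => mul_mul_abs_rpow_sub_two hpq.symm.pos (u x)
  have hg_pow : ∀ x, ‖g x‖ ^ p = |u x| ^ q := fun x => by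
    rw [hg_norm, ← Real.rpow_mul (abs_nonneg _), hpq.symm.sub_one_mul_conj]
  have hg : MemLp g ∞ μ := by
    have hpow := hu.norm_rpow_div (ENNReal.ofReal (q - 1))
    rw [ENNReal.toReal_ofReal (by linarith), ENNReal.top_div_of_ne_top ENNReal.ofReal_ne_top]
      at hpow
    have hgm : AEStronglyMeasurable g μ :=
      hu.1.mul (hu.1.aemeasurable.abs.pow_const _).aestronglyMeasurable
    exact hpow.of_le hgm (Eventually.of_forall fun x => (hg_norm x).trans_le (le_abs_self _))
  have hint : Integrable (fun x => |u x| ^ q) μ := by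
    simpa [ENNReal.toReal_ofReal hpq.symm.nonneg] using
      (hu.mono_exponent (le_top (a := ENNReal.ofReal q))).integrable_norm_rpow'
  set X := ∫ x, |u x| ^ q ∂μ
  have hug_norm : eLpNorm u (ENNReal.ofReal q) μ = ENNReal.ofReal (X ^ q⁻¹) :=
    eLpNorm_eq_ofReal_integral_norm_rpow hpq.symm.pos hint
  have hg_eLp : eLpNorm g (ENNReal.ofReal p) μ = ENNReal.ofReal (X ^ p⁻¹) := by
    rw [eLpNorm_eq_ofReal_integral_norm_rpow hp (by simpa only [hg_pow] using hint)]
    simp only [hg_pow, X]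
  have hX0 : 0 ≤ X := integral_nonneg fun x => by positivity
  rcases hX0.eq_or_lt with hX | hX
  · simp [hug_norm, ← hX, Real.zero_rpow (inv_ne_zero hpq.symm.ne_zero)]
  have hsplit : X ^ q⁻¹ * X ^ p⁻¹ = X := by
    rw [← Real.rpow_add hX, add_comm, hpq.inv_add_inv_eq_one, Real.rpow_one]
  rw [hug_norm, ← ENNReal.mul_le_mul_iff_left (c := ENNReal.ofReal (X ^ p⁻¹))
    (ENNReal.ofReal_pos.2 (by positivity)).ne' ENNReal.ofReal_ne_top,
    ← ENNReal.ofReal_mul (by positivity), hsplit]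
  simpa only [hug, hg_eLp] using h g hg

lemma ofReal_integral_mul_le {α : Type*} [MeasurableSpace α] {μ : Measure α}
    (hpq : p.HolderConjugate q) {f g : α → ℝ} (hf : AEStronglyMeasurable f μ)
    (hg : AEStronglyMeasurable g μ) :
    ENNReal.ofReal (∫ x, f x * g x ∂μ) ≤
      eLpNorm f (ENNReal.ofReal p) μ * eLpNorm g (ENNReal.ofReal q) μ := by
  have := hpq.ennrealOfReal
  calc ENNReal.ofReal (∫ x, f x * g x ∂μ) ≤ ‖∫ x, f x * g x ∂μ‖ₑ := by
        rw [← ofReal_norm]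
        exact ENNReal.ofReal_le_ofReal (le_abs_self _)
    _ ≤ eLpNorm (f • g) 1 μ := by
        rw [eLpNorm_one_eq_lintegral_enorm]
        exact enorm_integral_le_lintegral_enorm _
    _ ≤ _ := eLpNorm_smul_le_mul_eLpNorm hg hf

lemma eLpNorm_hermitePartialSum_le_of_dual (hpq : p.HolderConjugate q) {s : Set ℝ}
    (hs : MeasurableSet s) (hfin : volume s ≠ ∞) {n : ℕ}
    (h : ∀ g, IntegrableOn g s →
      eLpNorm (hermitePartialSum n (s.indicator g)) (ENNReal.ofReal p) (volume.restrict s) ≤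
        K * eLpNorm g (ENNReal.ofReal p) (volume.restrict s))
    {f : ℝ → ℝ} (hf : IntegrableOn f s) :
    eLpNorm (hermitePartialSum n (s.indicator f)) (ENNReal.ofReal q) (volume.restrict s) ≤
      K * eLpNorm f (ENNReal.ofReal q) (volume.restrict s) := by
  have : IsFiniteMeasure (volume.restrict s) := isFiniteMeasure_restrict.2 hfin
  refine eLpNorm_le_of_forall_integral_mul_le hpq (memLp_top_hermitePartialSum _ _ _)
    fun g hg => ?_
  have hgs : IntegrableOn g s := hg.integrable le_top
  have hsymm : ∫ x in s, hermitePartialSum n (s.indicator f) x * g x =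
      ∫ x in s, f x * hermitePartialSum n (s.indicator g) x := by
    simpa only [← indicator_mul_left, ← indicator_mul_right, integral_indicator hs] using
      integral_hermitePartialSum_mul_comm ((integrable_indicator_iff hs).2 hf)
        ((integrable_indicator_iff hs).2 hgs) n
  set N := eLpNorm f (ENNReal.ofReal q) (volume.restrict s)
  calc ENNReal.ofReal (∫ x in s, hermitePartialSum n (s.indicator f) x * g x)
      ≤ N * eLpNorm (hermitePartialSum n (s.indicator g)) (ENNReal.ofReal p)
          (volume.restrict s) := by
        rw [hsymm]
        exact ofReal_integral_mul_le hpq.symm hf.1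
          (continuous_hermitePartialSum n _).aestronglyMeasurable
    _ ≤ N * (K * eLpNorm g (ENNReal.ofReal p) (volume.restrict s)) := by
        gcongr
        exact h g hgs
    _ = K * N * eLpNorm g (ENNReal.ofReal p) (volume.restrict s) := by ring

lemma exists_eLpNorm_hermitePartialSum_le_of_le_two (hp : 1 < p) (hp2 : p ≤ 2) :
    ∃ C : ℝ, 0 ≤ C ∧ ∀ m : ℕ, 3 ≤ m → ∀ T : ℝ, 0 < T → ∀ n : ℕ, 1 ≤ n →
      ∀ f : ℝ → ℝ, IntegrableOn f (Ioo (-T) T) →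
      eLpNorm (hermitePartialSum n ((Ioo (-T) T).indicator f)) (ENNReal.ofReal p)
          (volume.restrict (Ioo (-T) T)) ≤
        ENNReal.ofReal (C * (1 + T ^ m / √n)) *
          eLpNorm f (ENNReal.ofReal p) (volume.restrict (Ioo (-T) T)) := by
  obtain ⟨C, hC, h⟩ := exists_eLpNorm_conjPoissonInt_le hp hp2
  refine ⟨100 * C, by positivity, fun m hm T hT n hn f hf => ?_⟩
  obtain ⟨a, ha, hna, haT⟩ := exists_abs_hermiteFun_le hT hn hm
  refine (eLpNorm_hermitePartialSum_le measurableSet_Ioo (Metric.isBounded_Ioo _ _) ha hna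
    (ENNReal.one_le_ofReal.2 hp.le) h hf).trans ?_
  rw [← ENNReal.ofReal_mul (by positivity)]
  gcongr ENNReal.ofReal ?_ * _
  calc √(2 * (n + 1)) * a ^ 2 * C ≤ 100 * (1 + T ^ m / √n) * C := by gcongr
    _ = 100 * C * (1 + T ^ m / √n) := by ring

lemma exists_eLpNorm_hermitePartialSum_le (hp : 1 < p) :
    ∃ C : ℝ, 0 ≤ C ∧ ∀ m : ℕ, 3 ≤ m → ∀ T : ℝ, 0 < T → ∀ n : ℕ, 1 ≤ n →
      ∀ f : ℝ → ℝ, IntegrableOn f (Ioo (-T) T) →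
      eLpNorm (hermitePartialSum n ((Ioo (-T) T).indicator f)) (ENNReal.ofReal p)
          (volume.restrict (Ioo (-T) T)) ≤
        ENNReal.ofReal (C * (1 + T ^ m / √n)) *
          eLpNorm f (ENNReal.ofReal p) (volume.restrict (Ioo (-T) T)) := by
  rcases le_total p 2 with hp2 | hp2
  · exact exists_eLpNorm_hermitePartialSum_le_of_le_two hp hp2
  have hpq := (Real.HolderConjugate.conjExponent hp).symm
  have hq2 : p.conjExponent ≤ 2 := by
    rw [Real.conjExponent, div_le_iff₀ (by linarith)]
    linarith
  obtain ⟨C, hC, h⟩ := exists_eLpNorm_hermitePartialSum_le_of_le_two hpq.lt hq2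
  exact ⟨C, hC, fun m hm T hT n hn f hf => eLpNorm_hermitePartialSum_le_of_dual hpq
    measurableSet_Ioo measure_Ioo_lt_top.ne (h m hm T hT n hn) hf⟩

end Duality

/-! ### Decreasing rearrangements -/

section Rearrangement

variable {f g : ℝ → ℝ} {p : ℝ}

lemma antitone_decRearrange (f : ℝ → ℝ) : Antitone (decRearrange f) := fun _ _ hst =>
  sInf_le_sInf fun _ hl => ⟨hl.1, hl.2.trans (ENNReal.ofReal_le_ofReal hst)⟩

lemma decRearrange_mono (h : ∀ x, |f x| ≤ |g x|) (t : ℝ) : decRearrange f t ≤ decRearrange g t :=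
  sInf_le_sInf fun _ hl => ⟨hl.1, (measure_mono fun x hx =>
    lt_of_lt_of_le hx (ENNReal.ofReal_le_ofReal (h x))).trans hl.2⟩

lemma stieltjesT_mono {φ ψ : ℝ → ℝ≥0∞} (h : ∀ s, φ s ≤ ψ s) (t : ℝ) :
    stieltjesT φ t ≤ stieltjesT ψ t :=
  lintegral_mono fun s => ENNReal.div_le_div_right (h s) _

lemma le_decRearrange {l : ℝ≥0∞} {t : ℝ}
    (h : ENNReal.ofReal t < volume {x | l < ENNReal.ofReal |f x|}) : l ≤ decRearrange f t := by
  refine le_sInf fun m hm => ?_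
  by_contra! hml
  exact (h.trans_le ((measure_mono fun x hx => hml.trans hx).trans hm.2)).false

lemma le_volume_ofReal_lt (m : ℝ≥0∞) :
    m ≤ volume.restrict (Ioi (0 : ℝ)) {t | ENNReal.ofReal t < m} := by
  rw [Measure.restrict_apply (measurableSet_lt ENNReal.measurable_ofReal measurable_const)]
  rcases eq_or_ne m ∞ with rfl | hm
  · simp
  have hsub : Ioo 0 m.toReal ⊆ {t | ENNReal.ofReal t < m} ∩ Ioi 0 := fun t ht =>
    ⟨(ENNReal.ofReal_lt_iff_lt_toReal ht.1.le hm).2 ht.2, ht.1⟩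
  calc m = volume (Ioo 0 m.toReal) := by rw [Real.volume_Ioo, sub_zero, ENNReal.ofReal_toReal hm]
    _ ≤ _ := measure_mono hsub

lemma volume_lt_abs_le_volume_le_decRearrange (f : ℝ → ℝ) (l : ℝ≥0∞) :
    volume {x | l < ENNReal.ofReal |f x|} ≤
      volume.restrict (Ioi 0) {t | l ≤ decRearrange f t} :=
  (le_volume_ofReal_lt _).trans (measure_mono fun _ => le_decRearrange)

lemma lintegral_abs_rpow_le_lintegral_decRearrange_rpow (hp : 0 < p) (hf : AEMeasurable f) :
    ∫⁻ x, ENNReal.ofReal (|f x| ^ p) ≤ ∫⁻ t in Ioi (0 : ℝ), decRearrange f t ^ p := by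
  have hm : Measurable (decRearrange f) := (antitone_decRearrange f).measurable
  by_cases htop : ∫⁻ t in Ioi (0 : ℝ), decRearrange f t ^ p = ∞
  · exact htop ▸ le_top
  have hfin : ∀ᵐ t ∂volume.restrict (Ioi (0 : ℝ)), decRearrange f t ≠ ∞ := by
    filter_upwards [ae_lt_top (hm.pow_const p) htop] with t ht h
    simp [h, hp] at ht
  have htoReal : ∫⁻ t in Ioi (0 : ℝ), ENNReal.ofReal ((decRearrange f t).toReal ^ p) =
      ∫⁻ t in Ioi (0 : ℝ), decRearrange f t ^ p := by
    refine lintegral_congr_ae ?_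
    filter_upwards [hfin] with t ht
    rw [← ENNReal.ofReal_rpow_of_nonneg ENNReal.toReal_nonneg hp.le, ENNReal.ofReal_toReal ht]
  have hdist : ∀ l : ℝ, 0 < l → volume {x | l < |f x|} ≤
      volume.restrict (Ioi 0) {t | l ≤ (decRearrange f t).toReal} := fun l hl => by
    simp only [← ENNReal.ofReal_lt_ofReal_iff_of_nonneg hl.le]
    refine (volume_lt_abs_le_volume_le_decRearrange f _).trans (measure_mono_ae ?_)
    filter_upwards [hfin] with t ht
    exact (ENNReal.ofReal_le_iff_le_toReal ht).1
  rw [← htoReal, lintegral_rpow_eq_lintegral_meas_lt_mul volume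
      (Eventually.of_forall fun x => abs_nonneg (f x)) hf.abs hp,
    lintegral_rpow_eq_lintegral_meas_le_mul _ (Eventually.of_forall fun t => ENNReal.toReal_nonneg)
      hm.ennreal_toReal.aemeasurable hp]
  gcongr ENNReal.ofReal p * ?_
  exact setLIntegral_mono' measurableSet_Ioi fun l hl => mul_le_mul_left (hdist l hl) _

lemma le_two_mul_stieltjesT_of_antitone {φ : ℝ → ℝ≥0∞} (hφ : Antitone φ) {t : ℝ} (ht : 0 < t) :
    φ t ≤ 2 * stieltjesT φ t := by
  have ht0 : ENNReal.ofReal t ≠ 0 := (ENNReal.ofReal_pos.2 ht).ne'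
  calc φ t = 2 * ∫⁻ _ in Ioc 0 t, φ t / ENNReal.ofReal (2 * t) := by
        rw [setLIntegral_const, Real.volume_Ioc, sub_zero, ENNReal.ofReal_mul zero_le_two,
          ENNReal.ofReal_ofNat, mul_comm (_ / _), ← mul_assoc,
          ENNReal.mul_div_cancel (mul_ne_zero two_ne_zero ht0)
            (ENNReal.mul_ne_top ENNReal.ofNat_ne_top ENNReal.ofReal_ne_top)]
    _ ≤ 2 * ∫⁻ s in Ioc 0 t, φ s / ENNReal.ofReal (t + s) := by
        gcongr 2 * ?_
        refine setLIntegral_mono' measurableSet_Ioc fun s hs => ENNReal.div_le_div (hφ hs.2) ?_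
        exact ENNReal.ofReal_le_ofReal (by linarith [hs.2])
    _ ≤ 2 * stieltjesT φ t := by
        gcongr
        exact lintegral_mono_set Ioc_subset_Ioi_self

lemma eLpNorm_le_two_mul_stieltjesT (hp : 0 < p) (hf : AEMeasurable f) :
    eLpNorm f (ENNReal.ofReal p) ≤
      2 * (∫⁻ t in Ioi (0 : ℝ), stieltjesT (decRearrange f) t ^ p) ^ (1 / p) := by
  have hnorm : ∀ x, ‖f x‖ₑ ^ p = ENNReal.ofReal (|f x| ^ p) := fun x => by
    rw [Real.enorm_eq_ofReal_abs, ENNReal.ofReal_rpow_of_nonneg (abs_nonneg _) hp.le]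
  have hle : ∫⁻ x, ‖f x‖ₑ ^ p ≤
      2 ^ p * ∫⁻ t in Ioi (0 : ℝ), stieltjesT (decRearrange f) t ^ p := by
    simp only [hnorm]
    refine (lintegral_abs_rpow_le_lintegral_decRearrange_rpow hp hf).trans ?_
    rw [← lintegral_const_mul' _ _ (ENNReal.rpow_ne_top_of_nonneg hp.le ENNReal.ofNat_ne_top)]
    refine setLIntegral_mono' measurableSet_Ioi fun t ht => ?_
    rw [← ENNReal.mul_rpow_of_nonneg _ _ hp.le]
    exact ENNReal.rpow_le_rpow
      (le_two_mul_stieltjesT_of_antitone (antitone_decRearrange f) ht) hp.le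
  rw [eLpNorm_eq_lintegral_rpow_enorm_toReal (ENNReal.ofReal_pos.2 hp).ne'
    ENNReal.ofReal_ne_top, ENNReal.toReal_ofReal hp.le]
  refine (ENNReal.rpow_le_rpow hle (by positivity)).trans_eq ?_
  rw [ENNReal.mul_rpow_of_nonneg _ _ (by positivity), ← ENNReal.rpow_mul,
    mul_one_div_cancel hp.ne', ENNReal.rpow_one]

end Rearrangement

theorem hermitePartialSum_le_stieltjes_general (p : ℝ) (hp : 1 < p) :
    ∃ C : ℝ, 0 < C ∧ ∀ m : ℕ, 3 ≤ m → ∀ T : ℝ, 0 < T → ∀ n : ℕ, 1 ≤ n →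
      ∀ f : ℝ → ℝ, IntegrableOn f (Ioo (-T) T) →
      eLpNorm (hermitePartialSum n ((Ioo (-T) T).indicator f)) (ENNReal.ofReal p)
          (volume.restrict (Ioo (-T) T)) ≤
        ENNReal.ofReal (C * (1 + T ^ m / √n)) *
          (∫⁻ t in Ioi (0 : ℝ), stieltjesT (decRearrange f) t ^ p) ^ (1 / p) := by
  obtain ⟨C, hC, h⟩ := exists_eLpNorm_hermitePartialSum_le hp
  refine ⟨2 * C + 1, by positivity, fun m hm T hT n hn f hf => ?_⟩
  set s := Ioo (-T) T
  set R := fun g : ℝ → ℝ => (∫⁻ t in Ioi (0 : ℝ), stieltjesT (decRearrange g) t ^ p) ^ (1 / p)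
  have hR : R (s.indicator f) ≤ R f := by
    refine ENNReal.rpow_le_rpow (lintegral_mono fun t => ENNReal.rpow_le_rpow
      (stieltjesT_mono (decRearrange_mono fun x => ?_) t) (by positivity)) (by positivity)
    exact norm_indicator_le_norm_self f x
  have hf_norm : eLpNorm f (ENNReal.ofReal p) (volume.restrict s) ≤ 2 * R (s.indicator f) := by
    rw [← eLpNorm_indicator_eq_eLpNorm_restrict measurableSet_Ioo]
    exact eLpNorm_le_two_mul_stieltjesT (by linarith)
      ((aemeasurable_indicator_iff measurableSet_Ioo).2 hf.aemeasurable)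
  calc _ ≤ ENNReal.ofReal (C * (1 + T ^ m / √n)) * (2 * R f) := by
        refine (h m hm T hT n hn f hf).trans ?_
        gcongr
        exact hf_norm.trans (by gcongr)
    _ = ENNReal.ofReal (2 * C * (1 + T ^ m / √n)) * R f := by
        rw [← mul_assoc, mul_comm _ 2, ← ENNReal.ofReal_ofNat 2, ← ENNReal.ofReal_mul zero_le_two,
          mul_assoc 2]
    _ ≤ ENNReal.ofReal ((2 * C + 1) * (1 + T ^ m / √n)) * R f := by
        gcongr
        linarith

/-- **Control of the truncated partial Hermite sums by the Stieltjes transform of the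
decreasing rearrangement:**
`‖S_n(fχ_T)‖_{L^p(−T,T)} ≤ C (1 + T^{17}/√n) ‖S f*‖_{L^p(0,∞)}`. -/
theorem hermitePartialSum_le_stieltjes (p : ℝ) (hp : 1 < p) :
    ∃ C : ℝ, 0 < C ∧ ∀ T : ℝ, 0 < T → ∀ n : ℕ, 1 ≤ n → ∀ f : ℝ → ℝ,
      Measurable f → IntegrableOn f (Set.Ioo (-T) T) →
      eLpNorm (hermitePartialSum n (Set.indicator (Set.Ioo (-T) T) f))
          (ENNReal.ofReal p) (volume.restrict (Set.Ioo (-T) T))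
        ≤ ENNReal.ofReal (C * (1 + T ^ 17 / Real.sqrt n)) *
          (∫⁻ t in Set.Ioi (0 : ℝ), stieltjesT (decRearrange f) t ^ p) ^ (1 / p) := by
  obtain ⟨C, hC, h⟩ := hermitePartialSum_le_stieltjes_general p hp
  exact ⟨C, hC, fun T hT n hn f _ hf => h 17 (by norm_num) T hT n hn f hf⟩
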